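/- arXiv:2107.13417 — 7 statements merged into one kernel-verified Lean document; each statement's English description precedes it below -/
import Mathlib

section
/- Let k, m ∈ ℕ, λ ∈ (ℤ≥0)^k, and c̲ = (c_1,…,c_m) ∈ {1,…,k}^m with c_m = k, and assume that for every i ∈ {1,…,k}, i_{c̲} ≤ λ_i and λ_i − i_{c̲} ≤ |λ| − λ_i. Then f_{λ,c̲} = Σ_{S ⊆ {1,…,k−1}} f_{λ−ε_k, c̲(S)}, where ε_k is the k-th standard basis vector and, writing S = {s_1 < s_2 < … < s_{|S|}}, c̲(S) := (c_1,…,c_{m−1}, s_1,…,s_{|S|}) ∈ {1,…,k}^{m−1+|S|}. -/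
/-! Deleting the last root, which has color `k`, from a forest and promoting its children to roots
gives the recurrence. The children have pairwise distinct colors, all different from `k`, so they
are determined by the set `S ⊆ {1,…,k-1}` of their colors, and listing them by increasing color
gives a forest with root colors `c̲(S)`. Conversely, joining the roots colored by `S` to a new root
of color `k` restores the forest. Since a root of `c̲` has color `k`, `λ_k ≥ 1`.

The relation `IsGraft F G ι` says that `F` arises from `G` in this way, up to the identification `ι`
of vertices. It is total on both sides (`exists_isGraft_of_top`, `exists_isGraft_of_bottom`), and
isomorphisms transfer in both directions (`IsGraft.iso_of_iso`, `IsGraft.iso_of_iso_graft`), so it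
induces a bijection of isomorphism classes. The condition on unique paths is handled through the
equivalent local condition of `existsUnique_rootPath_iff`. -/

/- An `m`-rooted forest on vertex set `Fin n` with an injective `k`-coloring. -/
structure CForest (k m n : ℕ) where
  adj : Fin n → Fin n → Prop
  root : Fin m → Fin n
  color : Fin n → Fin k
  root_inj : Function.Injective root
  path_unique : ∀ v : Fin n, ∃! p : List (Fin n),
    List.Chain' adj p ∧ (∃ j : Fin m, p.head? = some (root j)) ∧ p.getLast? = some v
  color_inj : ∀ v : Fin n, Set.InjOn color ({v} ∪ {w | adj v w})

def CForest.Iso {k m n : ℕ} (F G : CForest k m n) : Prop :=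
  ∃ e : Fin n ≃ Fin n, (∀ v w : Fin n, F.adj v w ↔ G.adj (e v) (e w)) ∧
    (∀ j : Fin m, e (F.root j) = G.root j) ∧ (∀ v : Fin n, G.color (e v) = F.color v)

/- `f_{λ,c̲}`: the number of isomorphism classes of `(λ,c̲)`-forests. -/
noncomputable def forestCount (k m : ℕ) (lam : Fin k → ℕ) (c : Fin m → Fin k) : ℕ :=
  Nat.card (Quot (fun F G : {F : CForest k m (∑ i, lam i) //
    (∀ i : Fin k, (Finset.univ.filter (fun v => F.color v = i)).card = lam i) ∧
    (∀ j : Fin m, F.color (F.root j) = c j)} => CForest.Iso F.1 G.1))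

/- `i_{c̲}` : the number of roots colored `i`. -/
def rootColorCount {k m : ℕ} (c : Fin m → Fin k) (i : Fin k) : ℕ :=
  (Finset.univ.filter (fun j => c j = i)).card

/-! ### Paths from the roots -/

/-- `p` is a directed walk from some root to `v`. -/
def IsRootPath {V : Type*} {m : ℕ} (adj : V → V → Prop) (root : Fin m → V)
    (p : List V) (v : V) : Prop :=
  List.IsChain adj p ∧ (∃ j : Fin m, p.head? = some (root j)) ∧ p.getLast? = some v

section Paths

variable {V : Type*} {m : ℕ} {adj : V → V → Prop} {root : Fin m → V}

lemma isRootPath_singleton (j : Fin m) : IsRootPath adj root [root j] (root j) := by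
  simp [IsRootPath]

lemma IsRootPath.concat {p : List V} {b c : V} (hp : IsRootPath adj root p b) (h : adj b c) :
    IsRootPath adj root (p ++ [c]) c := by
  obtain ⟨h1, ⟨j, h2⟩, h3⟩ := hp
  refine ⟨?_, ⟨j, ?_⟩, by simp⟩
  · rw [List.isChain_append]
    refine ⟨h1, by simp, ?_⟩
    intro x hx y hy
    simp_all
  · simp [List.head?_append, h2]

lemma IsRootPath.decomp {p : List V} {x v : V} (hp : IsRootPath adj root (p ++ [x]) v) :
    x = v ∧ ((p = [] ∧ ∃ j, v = root j) ∨ ∃ u, IsRootPath adj root p u ∧ adj u v) := by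
  obtain ⟨h1, ⟨j, h2⟩, h3⟩ := hp
  have hx : x = v := by simpa using h3
  subst hx
  refine ⟨rfl, ?_⟩
  rcases List.eq_nil_or_concat' p with rfl | ⟨q, u, rfl⟩
  · left
    exact ⟨rfl, j, by simpa using h2⟩
  · right
    rw [List.isChain_append] at h1
    refine ⟨u, ⟨h1.1, ⟨j, ?_⟩, by simp⟩, h1.2.2 u (by simp) x (by simp)⟩
    simpa [List.head?_append] using h2

lemma IsRootPath.reach {p : List V} {v : V} (hp : IsRootPath adj root p v) :
    ∃ j, Relation.ReflTransGen adj (root j) v := by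
  induction p using List.reverseRecOn generalizing v with
  | nil => simp [IsRootPath] at hp
  | append_singleton p x ih =>
    obtain ⟨rfl, ⟨-, j, rfl⟩ | ⟨u, hu, huv⟩⟩ := hp.decomp
    · exact ⟨j, .refl⟩
    · obtain ⟨j, hj⟩ := ih hu
      exact ⟨j, hj.tail huv⟩

/-- Local form of the forest condition: unique walks from the roots exist exactly when roots have
no parent, every vertex has at most one parent, and every vertex is reachable from a root. -/
lemma existsUnique_rootPath_iff :
    (∀ v, ∃! p, IsRootPath adj root p v) ↔
      (∀ j v, ¬ adj v (root j)) ∧ (∀ u v w, adj u w → adj v w → u = v) ∧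
        ∀ v, ∃ j, Relation.ReflTransGen adj (root j) v := by
  constructor
  · intro h
    refine ⟨?_, ?_, ?_⟩
    · intro j v hv
      obtain ⟨p, hp, -⟩ := h v
      have := (h (root j)).unique (hp.concat hv) (isRootPath_singleton j)
      have hnil : p = [] := by simpa using congrArg List.dropLast this
      subst hnil
      simp [IsRootPath] at hp
    · intro u v w hu hv
      obtain ⟨p, hp, -⟩ := h u
      obtain ⟨q, hq, -⟩ := h v
      have := (h w).unique (hp.concat hu) (hq.concat hv)
      have hpq : p = q := by simpa using this
      subst hpq
      simpa [hp.2.2] using hq.2.2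
    · intro v
      exact (h v).exists.choose_spec.reach
  · rintro ⟨ha, hb, hc⟩ v
    refine existsUnique_of_exists_of_unique ?_ ?_
    · obtain ⟨j, hj⟩ := hc v
      induction hj with
      | refl => exact ⟨_, isRootPath_singleton j⟩
      | tail _ h ih => exact ⟨_, ih.choose_spec.concat h⟩
    · intro p q hp hq
      induction p using List.reverseRecOn generalizing v q with
      | nil => simp [IsRootPath] at hp
      | append_singleton p x ih =>
        rcases List.eq_nil_or_concat' q with rfl | ⟨q, y, rfl⟩
        · simp [IsRootPath] at hq
        obtain ⟨rfl, hp'⟩ := hp.decomp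
        obtain ⟨rfl, hq'⟩ := hq.decomp
        rcases hp' with ⟨rfl, j, rfl⟩ | ⟨u, hu, huv⟩
        · rcases hq' with ⟨rfl, -⟩ | ⟨w, -, hw⟩
          · rfl
          · exact absurd hw (ha _ _)
        · rcases hq' with ⟨-, j, rfl⟩ | ⟨w, hw, hwv⟩
          · exact absurd huv (ha _ _)
          · obtain rfl := hb _ _ _ huv hwv
            rw [ih u q hu hw]

end Paths

/-! ### Isomorphism classes -/

namespace CForest

variable {k m n : ℕ}

lemma localForm (F : CForest k m n) :
    (∀ j v, ¬ F.adj v (F.root j)) ∧ (∀ u v w, F.adj u w → F.adj v w → u = v) ∧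
      ∀ v, ∃ j, Relation.ReflTransGen F.adj (F.root j) v :=
  existsUnique_rootPath_iff.1 F.path_unique

lemma not_adj_root (F : CForest k m n) (j : Fin m) (v : Fin n) : ¬ F.adj v (F.root j) :=
  F.localForm.1 j v

lemma parent_unique (F : CForest k m n) {u v w : Fin n} (hu : F.adj u w) (hv : F.adj v w) :
    u = v :=
  F.localForm.2.1 u v w hu hv

lemma Iso.refl (F : CForest k m n) : F.Iso F := ⟨Equiv.refl _, by simp, by simp, by simp⟩

lemma Iso.symm {F G : CForest k m n} (h : F.Iso G) : G.Iso F := by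
  obtain ⟨e, h1, h2, h3⟩ := h
  refine ⟨e.symm, fun v w => ?_, fun j => ?_, fun v => ?_⟩
  · simp [h1]
  · simp [← h2]
  · simp [← h3]

lemma Iso.trans {F G H : CForest k m n} (h : F.Iso G) (h' : G.Iso H) : F.Iso H := by
  obtain ⟨e, h1, h2, h3⟩ := h
  obtain ⟨e', h1', h2', h3'⟩ := h'
  exact ⟨e.trans e', by simp [h1, h1'], by simp [h2, h2'], by simp [h3, h3']⟩

instance : Finite (CForest k m n) :=
  Finite.of_injective
    (fun F : CForest k m n => (F.adj, F.root, F.color)) (by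
      rintro ⟨⟩ ⟨⟩ h
      simp only [Prod.mk.injEq] at h
      obtain ⟨rfl, rfl, rfl⟩ := h
      rfl)

end CForest

/-- The `(λ,c̲)`-forests on `Fin n`; nonempty only when `n = |λ|`. -/
def ColForest (k m n : ℕ) (lam : Fin k → ℕ) (c : Fin m → Fin k) : Type :=
  {F : CForest k m n //
    (∀ i : Fin k, (Finset.univ.filter (fun v => F.color v = i)).card = lam i) ∧
    (∀ j : Fin m, F.color (F.root j) = c j)}

instance (k m n : ℕ) (lam : Fin k → ℕ) (c : Fin m → Fin k) : Finite (ColForest k m n lam c) :=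
  inferInstanceAs (Finite (Subtype _))

/-- Isomorphism of `(λ,c̲)`-forests as a setoid. -/
def colSetoid (k m n : ℕ) (lam : Fin k → ℕ) (c : Fin m → Fin k) :
    Setoid (ColForest k m n lam c) where
  r F G := F.1.Iso G.1
  iseqv := ⟨fun F => .refl F.1, fun h => h.symm, fun h h' => h.trans h'⟩

lemma forestCount_eq (k m n : ℕ) (lam : Fin k → ℕ) (c : Fin m → Fin k) (hn : ∑ i, lam i = n) :
    forestCount k m lam c = Nat.card (Quotient (colSetoid k m n lam c)) := by
  subst hn
  rfl

/-! ### Counting classes of setoids -/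

/-- Classes of two setoids are equinumerous as soon as a relation, total on both sides, matches
equivalent elements with equivalent elements and conversely. -/
lemma card_quotient_eq_of_rel {A B : Type*} (r : Setoid A) (s : Setoid B) (E : A → B → Prop)
    (hA : ∀ a, ∃ b, E a b) (hB : ∀ b, ∃ a, E a b)
    (hE : ∀ a b a' b', E a b → E a' b' → (r a a' ↔ s b b')) :
    Nat.card (Quotient r) = Nat.card (Quotient s) := by
  choose f hf using hA
  refine Nat.card_congr (Equiv.ofBijective
    (Quotient.map f fun a a' h => (hE _ _ _ _ (hf a) (hf a')).1 h) ⟨?_, ?_⟩)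
  · intro x y
    induction x using Quotient.inductionOn with | _ a
    induction y using Quotient.inductionOn with | _ a'
    intro h
    rw [Quotient.map_mk, Quotient.map_mk, Quotient.eq] at h
    exact Quotient.sound ((hE _ _ _ _ (hf a) (hf a')).2 h)
  · intro y
    induction y using Quotient.inductionOn with | _ b
    obtain ⟨a, ha⟩ := hB b
    refine ⟨⟦a⟧, ?_⟩
    rw [Quotient.map_mk, Quotient.eq]
    exact (hE _ _ _ _ (hf a) ha).1 (r.refl a)

/-- The disjoint union of a family of setoids. -/
def sigmaSetoid {I : Type*} {B : I → Type*} (s : ∀ i, Setoid (B i)) : Setoid (Σ i, B i) where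
  r x y := ∃ h : x.1 = y.1, s y.1 (h ▸ x.2) y.2
  iseqv := by
    refine ⟨fun x => ⟨rfl, (s _).refl _⟩, ?_, ?_⟩
    · rintro ⟨i, x⟩ ⟨j, y⟩ ⟨h, h'⟩
      obtain rfl : i = j := h
      exact ⟨rfl, (s _).symm h'⟩
    · rintro ⟨i, x⟩ ⟨j, y⟩ ⟨l, z⟩ ⟨h, h'⟩ ⟨h2, h2'⟩
      obtain rfl : i = j := h
      obtain rfl : i = l := h2
      exact ⟨rfl, (s _).trans h' h2'⟩

lemma card_quotient_sigmaSetoid {I : Type*} [Fintype I] {B : I → Type*} [∀ i, Finite (B i)]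
    (s : ∀ i, Setoid (B i)) :
    Nat.card (Quotient (sigmaSetoid s)) = ∑ i, Nat.card (Quotient (s i)) := by
  rw [← Nat.card_sigma]
  refine Nat.card_congr
    { toFun := Quotient.lift (fun x => (⟨x.1, ⟦x.2⟧⟩ : Σ i, Quotient (s i))) ?_
      invFun := fun x => Quotient.map (sb := sigmaSetoid s) (fun b => ⟨x.1, b⟩)
        (fun a b h => ⟨rfl, h⟩) x.2
      left_inv := ?_
      right_inv := ?_ }
  · rintro ⟨i, x⟩ ⟨j, y⟩ ⟨h, h'⟩
    obtain rfl : i = j := h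
    have : (⟦x⟧ : Quotient (s i)) = ⟦y⟧ := Quotient.sound h'
    simp [this]
  · intro x
    induction x using Quotient.inductionOn
    rfl
  · rintro ⟨i, x⟩
    induction x using Quotient.inductionOn
    rfl

/-! ### Grafting roots onto a new root -/

/-- `F` is obtained from `G` by joining the last `l` roots of `G` to a new vertex, which becomes the
last root of `F`. The vertices of `G` are identified with the other vertices of `F` via `ι`. -/
structure IsGraft {k m n l : ℕ} (F : CForest k (m + 1) (n + 1)) (G : CForest k (m + l) n)
    (ι : Fin n → Fin (n + 1)) : Prop where
  inj : Function.Injective ι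
  ne_root : ∀ v, ι v ≠ F.root (Fin.last m)
  surj : ∀ u, u ≠ F.root (Fin.last m) → ∃ v, ι v = u
  adj_iff : ∀ v w, F.adj (ι v) (ι w) ↔ G.adj v w
  color_eq : ∀ v, F.color (ι v) = G.color v
  root_old : ∀ j : Fin m, F.root j.castSucc = ι (G.root (Fin.castAdd l j))
  root_new : ∀ w, F.adj (F.root (Fin.last m)) (ι w) ↔ ∃ j, w = G.root (Fin.natAdd m j)

namespace IsGraft

variable {k m n l : ℕ}

/-- The bijection between the vertices of `G` with a point added and the vertices of `F`. -/
noncomputable def vertexEquiv {F : CForest k (m + 1) (n + 1)} {G : CForest k (m + l) n}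
    {ι : Fin n → Fin (n + 1)} (h : IsGraft F G ι) : Option (Fin n) ≃ Fin (n + 1) :=
  Equiv.ofBijective (fun o => o.elim (F.root (Fin.last m)) ι) (by
    constructor
    · rintro (_ | v) (_ | w) hvw
      · rfl
      · exact absurd hvw.symm (h.ne_root w)
      · exact absurd hvw (h.ne_root v)
      · exact congrArg some (h.inj hvw)
    · intro u
      by_cases hu : u = F.root (Fin.last m)
      · exact ⟨none, hu.symm⟩
      · obtain ⟨v, rfl⟩ := h.surj u hu
        exact ⟨some v, rfl⟩)

@[simp] lemma vertexEquiv_none {F : CForest k (m + 1) (n + 1)} {G : CForest k (m + l) n}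
    {ι : Fin n → Fin (n + 1)} (h : IsGraft F G ι) :
    h.vertexEquiv none = F.root (Fin.last m) := rfl

@[simp] lemma vertexEquiv_some {F : CForest k (m + 1) (n + 1)} {G : CForest k (m + l) n}
    {ι : Fin n → Fin (n + 1)} (h : IsGraft F G ι) (v : Fin n) :
    h.vertexEquiv (some v) = ι v := rfl

lemma card_color {F : CForest k (m + 1) (n + 1)} {G : CForest k (m + l) n}
    {ι : Fin n → Fin (n + 1)} (h : IsGraft F G ι) (i : Fin k) :
    (Finset.univ.filter (fun v => F.color v = i)).card =
      (Finset.univ.filter (fun v => G.color v = i)).card +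
        if F.color (F.root (Fin.last m)) = i then 1 else 0 := by
  rw [Finset.card_filter, Finset.card_filter, ← h.vertexEquiv.sum_comp, Fintype.sum_option,
    add_comm]
  simp only [vertexEquiv_some, vertexEquiv_none, h.color_eq]
  congr

lemma iso_of_iso {F F' : CForest k (m + 1) (n + 1)} {G G' : CForest k (m + l) n}
    {ι ι' : Fin n → Fin (n + 1)} (h : IsGraft F G ι) (h' : IsGraft F' G' ι')
    (hc : F.color (F.root (Fin.last m)) = F'.color (F'.root (Fin.last m)))
    (hG : G.Iso G') : F.Iso F' := by
  obtain ⟨e, h1, h2, h3⟩ := hG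
  let E : Fin (n + 1) ≃ Fin (n + 1) :=
    h.vertexEquiv.symm.trans ((Equiv.optionCongr e).trans h'.vertexEquiv)
  have E0 : E (F.root (Fin.last m)) = F'.root (Fin.last m) := by
    rw [← h.vertexEquiv_none, Equiv.trans_apply, Equiv.symm_apply_apply]
    rfl
  have E1 : ∀ v, E (ι v) = ι' (e v) := by
    intro v
    rw [← h.vertexEquiv_some, Equiv.trans_apply, Equiv.symm_apply_apply]
    rfl
  have cases_v : ∀ v, v = F.root (Fin.last m) ∨ ∃ w, ι w = v := fun v => by
    by_cases hv : v = F.root (Fin.last m)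
    · exact .inl hv
    · exact .inr (h.surj v hv)
  refine ⟨E, fun v w => ?_, fun j => ?_, fun v => ?_⟩
  · obtain rfl | ⟨w, rfl⟩ := cases_v w
    · rw [E0]
      exact iff_of_false (F.not_adj_root _ _) (F'.not_adj_root _ _)
    obtain rfl | ⟨v, rfl⟩ := cases_v v
    · rw [E0, E1, h.root_new, h'.root_new]
      simp [← h2]
    · rw [E1, E1, h.adj_iff, h'.adj_iff, h1]
  · induction j using Fin.lastCases with
    | last => exact E0
    | cast j => rw [h.root_old, h'.root_old, E1, h2]
  · obtain rfl | ⟨v, rfl⟩ := cases_v v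
    · rw [E0, hc]
    · rw [E1, h.color_eq, h'.color_eq, h3]

/-- An isomorphism of grafts restricts to one of the original forests. The new roots are matched in
the right order because they are distinguished by their colors `d`. -/
lemma iso_of_iso_graft {F F' : CForest k (m + 1) (n + 1)} {G G' : CForest k (m + l) n}
    {ι ι' : Fin n → Fin (n + 1)} (h : IsGraft F G ι) (h' : IsGraft F' G' ι')
    {d : Fin l → Fin k} (hd : Function.Injective d)
    (hG : ∀ j, G.color (G.root (Fin.natAdd m j)) = d j)
    (hG' : ∀ j, G'.color (G'.root (Fin.natAdd m j)) = d j)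
    (hF : F.Iso F') : G.Iso G' := by
  obtain ⟨E, h1, h2, h3⟩ := hF
  have key : ∀ v, ∃ w, ι' w = E (ι v) := fun v => by
    apply h'.surj
    rw [← h2]
    exact fun hv => h.ne_root v (E.injective hv)
  choose e he using key
  have einj : Function.Injective e := fun v w hvw => by
    apply h.inj
    apply E.injective
    rw [← he, ← he, hvw]
  let e' : Fin n ≃ Fin n := Equiv.ofBijective e (Finite.injective_iff_bijective.1 einj)
  have he' : ∀ v, ι' (e' v) = E (ι v) := he
  have hcol : ∀ v, G'.color (e' v) = G.color v := fun v => by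
    rw [← h'.color_eq, he', h3, h.color_eq]
  refine ⟨e', fun v w => ?_, fun j => ?_, hcol⟩
  · rw [← h.adj_iff, ← h'.adj_iff, he', he', h1]
  · induction j using Fin.addCases with
    | left j =>
      apply h'.inj
      rw [he', ← h.root_old, ← h'.root_old, h2]
    | right j =>
      have h4 : F'.adj (F'.root (Fin.last m)) (ι' (e' (G.root (Fin.natAdd m j)))) := by
        rw [he', ← h2, ← h1, h.root_new]
        exact ⟨j, rfl⟩
      rw [h'.root_new] at h4
      obtain ⟨j', hj'⟩ := h4
      have h5 := hcol (G.root (Fin.natAdd m j))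
      rw [hj', hG', hG] at h5
      rw [hj', hd h5]

lemma range_color {F : CForest k (m + 1) (n + 1)} {G : CForest k (m + l) n}
    {ι : Fin n → Fin (n + 1)} (h : IsGraft F G ι) (i : Fin k) :
    (∃ w, F.adj (F.root (Fin.last m)) w ∧ F.color w = i) ↔
      ∃ j, G.color (G.root (Fin.natAdd m j)) = i := by
  constructor
  · rintro ⟨w, hw, rfl⟩
    obtain ⟨v, rfl⟩ := h.surj w (fun hw' => F.not_adj_root _ _ (hw' ▸ hw))
    obtain ⟨j, rfl⟩ := (h.root_new v).1 hw
    exact ⟨j, (h.color_eq _).symm⟩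
  · rintro ⟨j, rfl⟩
    exact ⟨_, (h.root_new _).2 ⟨j, rfl⟩, h.color_eq _⟩

end IsGraft

/-! ### Existence of grafts -/

/-- Deleting the last root of a forest and promoting its children, listed in the order prescribed
by their colors `d`, to roots. -/
lemma exists_isGraft_of_top {k m n l : ℕ} (F : CForest k (m + 1) (n + 1)) (d : Fin l → Fin k)
    (hd : Function.Injective d)
    (hF : ∀ i, (∃ w, F.adj (F.root (Fin.last m)) w ∧ F.color w = i) ↔ ∃ j, d j = i) :
    ∃ (G : CForest k (m + l) n) (ι : Fin n → Fin (n + 1)),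
      IsGraft F G ι ∧ ∀ j, G.color (G.root (Fin.natAdd m j)) = d j := by
  set r := F.root (Fin.last m) with hr
  let ι : Fin n → Fin (n + 1) := r.succAbove
  have ιinj : Function.Injective ι := Fin.succAbove_right_injective
  have ιne : ∀ v, ι v ≠ r := fun v => Fin.succAbove_ne r v
  have ιsurj : ∀ u, u ≠ r → ∃ v, ι v = u := fun u hu => Fin.exists_succAbove_eq hu
  have hold : ∀ j : Fin m, ∃ v, ι v = F.root j.castSucc := fun j =>
    ιsurj _ fun h => (Fin.castSucc_lt_last j).ne (F.root_inj h)
  have hnew : ∀ j : Fin l, ∃ v, F.adj r (ι v) ∧ F.color (ι v) = d j := fun j => by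
    obtain ⟨w, hw, hwd⟩ := (hF (d j)).2 ⟨j, rfl⟩
    obtain ⟨v, rfl⟩ := ιsurj w (fun hw' => F.not_adj_root _ _ (hw' ▸ hw))
    exact ⟨v, hw, hwd⟩
  choose f hf using hold
  choose g hg hgd using hnew
  have gsurj : ∀ v, F.adj r (ι v) → ∃ j, v = g j := fun v hv => by
    obtain ⟨j, hj⟩ := (hF _).1 ⟨_, hv, rfl⟩
    refine ⟨j, ιinj (F.color_inj r (.inr hv) (.inr (hg j)) ?_)⟩
    rw [hgd, hj]
  let G : CForest k (m + l) n :=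
    { adj := fun v w => F.adj (ι v) (ι w)
      root := Fin.append f g
      color := fun v => F.color (ι v)
      root_inj := by
        rw [Fin.append_injective_iff]
        refine ⟨fun i j h => ?_, fun i j h => ?_, fun i j h => ?_⟩
        · have := hf i
          rw [h, hf j] at this
          exact (Fin.castSucc_injective _ (F.root_inj this)).symm
        · apply hd
          rw [← hgd, h, hgd]
        · apply F.not_adj_root i.castSucc r
          rw [← hf, h]
          exact hg j
      path_unique := by
        refine existsUnique_rootPath_iff.2 ⟨fun j v => ?_, fun u v w hu hv => ?_, fun v => ?_⟩
        · induction j using Fin.addCases with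
          | left j =>
            rw [Fin.append_left, hf]
            exact F.not_adj_root _ _
          | right j =>
            rw [Fin.append_right]
            exact fun h => ιne v (F.parent_unique h (hg j))
        · exact ιinj (F.parent_unique hu hv)
        · obtain ⟨j, hj⟩ := F.localForm.2.2 (ι v)
          generalize hu : ι v = u at hj
          induction hj generalizing v with
          | refl =>
            induction j using Fin.lastCases with
            | last => exact absurd hu (ιne v)
            | cast j =>
              refine ⟨Fin.castAdd l j, ?_⟩
              rw [Fin.append_left, ιinj (hu.trans (hf j).symm)]
          | @tail b c _ hbc ih =>
            subst hu
            by_cases hb : b = r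
            · obtain ⟨i, rfl⟩ := gsurj v (hb ▸ hbc)
              refine ⟨Fin.natAdd m i, ?_⟩
              rw [Fin.append_right]
            · obtain ⟨w, rfl⟩ := ιsurj b hb
              obtain ⟨i, hi⟩ := ih w rfl
              exact ⟨i, hi.tail hbc⟩
      color_inj := fun v x hx y hy hxy => by
        refine ιinj (F.color_inj (ι v) ?_ ?_ hxy)
        · exact hx.imp (fun h => congrArg ι h) id
        · exact hy.imp (fun h => congrArg ι h) id }
  refine ⟨G, ι, ⟨ιinj, ιne, ιsurj, fun _ _ => Iff.rfl, fun _ => rfl, fun j => ?_, fun w => ?_⟩,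
    fun j => ?_⟩
  · simp [G, hf]
  · simp only [G, Fin.append_right]
    exact ⟨gsurj w, by rintro ⟨j, rfl⟩; exact hg j⟩
  · simp [G, hgd]

/-- Joining the last roots of a forest to a new root of color `a`; this keeps the coloring
injective when those roots have pairwise distinct colors, all different from `a`. -/
lemma exists_isGraft_of_bottom {k m n l : ℕ} (G : CForest k (m + l) n) (a : Fin k)
    (d : Fin l → Fin k) (hd : Function.Injective d) (ha : ∀ j, d j ≠ a)
    (hG : ∀ j, G.color (G.root (Fin.natAdd m j)) = d j) :
    ∃ (F : CForest k (m + 1) (n + 1)) (ι : Fin n → Fin (n + 1)),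
      IsGraft F G ι ∧ F.color (F.root (Fin.last m)) = a := by
  let A : Fin (n + 1) → Fin (n + 1) → Prop := fun v w =>
    (∃ v' w', v = Fin.succ v' ∧ w = Fin.succ w' ∧ G.adj v' w') ∨
      (v = 0 ∧ ∃ j, w = Fin.succ (G.root (Fin.natAdd m j)))
  have A1 : ∀ v w, A (Fin.succ v) (Fin.succ w) ↔ G.adj v w := by
    intro v w
    simp only [A, Fin.succ_inj]
    constructor
    · rintro (⟨_, _, rfl, rfl, h⟩ | ⟨h, -⟩)
      · exact h
      · exact absurd h (Fin.succ_ne_zero v)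
    · exact fun h => .inl ⟨_, _, rfl, rfl, h⟩
  have A2 : ∀ w, A 0 (Fin.succ w) ↔ ∃ j, w = G.root (Fin.natAdd m j) := by
    intro w
    simp only [A, Fin.succ_inj]
    constructor
    · rintro (⟨_, _, h, -⟩ | ⟨-, h⟩)
      · exact absurd h.symm (Fin.succ_ne_zero _)
      · exact h
    · exact fun h => .inr ⟨trivial, h⟩
  have A3 : ∀ v, ¬ A v 0 := by
    rintro v (⟨_, _, -, h, -⟩ | ⟨-, _, h⟩)
    · exact Fin.succ_ne_zero _ h.symm
    · exact Fin.succ_ne_zero _ h.symm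
  let R : Fin (m + 1) → Fin (n + 1) :=
    Fin.snoc (α := fun _ => Fin (n + 1)) (fun j => (G.root (Fin.castAdd l j)).succ) 0
  have R1 : ∀ j : Fin m, R j.castSucc = (G.root (Fin.castAdd l j)).succ := fun j => by
    simp [R]
  have R2 : R (Fin.last m) = 0 := by simp [R]
  let C : Fin (n + 1) → Fin k := Fin.cons (α := fun _ => Fin k) a G.color
  have C0 : C 0 = a := rfl
  have C1 : ∀ v, C (Fin.succ v) = G.color v := fun v => rfl
  let F : CForest k (m + 1) (n + 1) :=
    { adj := A
      root := R
      color := C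
      root_inj := by
        intro i j hij
        induction i using Fin.lastCases with
        | last =>
          induction j using Fin.lastCases with
          | last => rfl
          | cast j =>
            rw [R1, R2] at hij
            exact absurd hij.symm (Fin.succ_ne_zero _)
        | cast i =>
          induction j using Fin.lastCases with
          | last =>
            rw [R1, R2] at hij
            exact absurd hij (Fin.succ_ne_zero _)
          | cast j =>
            rw [R1, R1, Fin.succ_inj] at hij
            rw [Fin.castAdd_injective _ _ (G.root_inj hij)]
      path_unique := by
        refine existsUnique_rootPath_iff.2 ⟨fun j v => ?_, fun u v w hu hv => ?_, fun v => ?_⟩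
        · induction j using Fin.lastCases with
          | last =>
            rw [R2]
            exact A3 v
          | cast j =>
            rw [R1]
            cases v using Fin.cases with
            | zero =>
              rw [A2]
              rintro ⟨i, hi⟩
              have := congrArg Fin.val (G.root_inj hi)
              simp only [Fin.val_castAdd, Fin.val_natAdd] at this
              omega
            | succ v =>
              rw [A1]
              exact G.not_adj_root _ _
        · cases w using Fin.cases with
          | zero => exact absurd hu (A3 u)
          | succ w =>
            cases u using Fin.cases with
            | zero =>
              cases v using Fin.cases with
              | zero => rfl
              | succ v =>
                obtain ⟨j, rfl⟩ := (A2 w).1 hu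
                exact absurd ((A1 _ _).1 hv) (G.not_adj_root _ _)
            | succ u =>
              cases v using Fin.cases with
              | zero =>
                obtain ⟨j, rfl⟩ := (A2 w).1 hv
                exact absurd ((A1 _ _).1 hu) (G.not_adj_root _ _)
              | succ v =>
                rw [G.parent_unique ((A1 _ _).1 hu) ((A1 _ _).1 hv)]
        · cases v using Fin.cases with
          | zero => exact ⟨Fin.last m, R2 ▸ .refl⟩
          | succ v =>
            obtain ⟨j, hj⟩ := G.localForm.2.2 v
            have hj' : Relation.ReflTransGen A (G.root j).succ v.succ :=
              hj.lift Fin.succ fun x y h => (A1 x y).2 h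
            induction j using Fin.addCases with
            | left j => exact ⟨j.castSucc, by rwa [R1]⟩
            | right j => exact ⟨Fin.last m, by rw [R2]; exact hj'.head ((A2 _).2 ⟨j, rfl⟩)⟩
      color_inj := by
        intro v
        cases v using Fin.cases with
        | zero =>
          have hcol : ∀ w, A 0 w → ∃ j, w = (G.root (Fin.natAdd m j)).succ ∧ C w = d j := by
            intro w hw
            cases w using Fin.cases with
            | zero => exact absurd hw (A3 0)
            | succ w =>
              obtain ⟨j, rfl⟩ := (A2 w).1 hw
              exact ⟨j, rfl, by rw [C1, hG]⟩
          rintro x (rfl | hx) y (rfl | hy) hxy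
          · rfl
          · obtain ⟨j, rfl, hj⟩ := hcol y hy
            exact absurd (hj.symm.trans hxy.symm) (ha j)
          · obtain ⟨j, rfl, hj⟩ := hcol x hx
            exact absurd (hj.symm.trans hxy) (ha j)
          · obtain ⟨j, rfl, hj⟩ := hcol x hx
            obtain ⟨j', rfl, hj'⟩ := hcol y hy
            rw [hd (hj.symm.trans (hxy.trans hj'))]
        | succ v =>
          have hmem : ∀ w, w ∈ ({v.succ} ∪ {w | A v.succ w} : Set (Fin (n + 1))) →
              ∃ w', w = Fin.succ w' ∧ w' ∈ ({v} ∪ {w | G.adj v w} : Set (Fin n)) := by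
            rintro w (rfl | hw)
            · exact ⟨v, rfl, .inl rfl⟩
            · cases w using Fin.cases with
              | zero => exact absurd hw (A3 _)
              | succ w => exact ⟨w, rfl, .inr ((A1 _ _).1 hw)⟩
          intro x hx y hy hxy
          obtain ⟨x, rfl, hx'⟩ := hmem x hx
          obtain ⟨y, rfl, hy'⟩ := hmem y hy
          rw [G.color_inj v hx' hy' hxy] }
  have hFr : F.root (Fin.last m) = 0 := R2
  refine ⟨F, Fin.succ, ⟨Fin.succ_injective n, fun v => ?_, fun u hu => ?_, A1, C1, R1,
    fun w => ?_⟩, ?_⟩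
  · rw [hFr]
    exact Fin.succ_ne_zero v
  · rw [hFr] at hu
    exact Fin.exists_succ_eq.2 hu
  · rw [hFr]
    exact A2 w
  · rw [hFr]
    exact C0

/-! ### The recurrence -/

/-- The root colors `c̲(S)`: the last entry of `c` is replaced by the elements of `S` in increasing
order. -/
def graftColors {k m : ℕ} (c : Fin (m + 1) → Fin k) (S : Finset (Fin k)) :
    Fin (m + S.card) → Fin k :=
  Fin.append (fun j : Fin m => c j.castSucc) (S.orderEmbOfFin rfl)

/-- The recurrence, with the numbers of roots and of vertices in successor form. -/
lemma card_quotient_recurrence {k m n : ℕ} (lam lam' : Fin k → ℕ) (c : Fin (m + 1) → Fin k)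
    (a : Fin k) (hc : c (Fin.last m) = a)
    (hlam : ∀ i, lam i = lam' i + if a = i then 1 else 0) :
    Nat.card (Quotient (colSetoid k (m + 1) (n + 1) lam c)) =
      ∑ S ∈ (Finset.univ.erase a).powerset,
        Nat.card (Quotient (colSetoid k (m + S.card) n lam' (graftColors c S))) := by
  rw [← Finset.sum_coe_sort, ← card_quotient_sigmaSetoid
    (fun S : (Finset.univ.erase a).powerset =>
      colSetoid k (m + S.1.card) n lam' (graftColors c S.1))]
  have hnew : ∀ (S : Finset (Fin k)) (G : ColForest k (m + S.card) n lam' (graftColors c S)) j,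
      G.1.color (G.1.root (Fin.natAdd m j)) = S.orderEmbOfFin rfl j := fun S G j => by
    rw [G.2.2, graftColors, Fin.append_right]
  have hrange : ∀ (S : Finset (Fin k)) i, (∃ j, S.orderEmbOfFin rfl j = i) ↔ i ∈ S :=
    fun S i => by
      rw [← Set.mem_range, Finset.range_orderEmbOfFin, Finset.mem_coe]
  refine card_quotient_eq_of_rel _ _ (fun F x => ∃ ι, IsGraft F.1 x.2.1 ι) ?_ ?_ ?_
  · rintro ⟨F, hF1, hF2⟩
    classical
    have hFa : F.color (F.root (Fin.last m)) = a := (hF2 _).trans hc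
    -- `S` has to be the set of colors of the children of the last root.
    let S : Finset (Fin k) :=
      Finset.univ.filter fun i => ∃ w, F.adj (F.root (Fin.last m)) w ∧ F.color w = i
    have hS : S ∈ (Finset.univ.erase a).powerset := by
      rw [Finset.mem_powerset]
      intro i hi
      obtain ⟨w, hw, rfl⟩ := (Finset.mem_filter.1 hi).2
      refine Finset.mem_erase.2 ⟨fun h => ?_, Finset.mem_univ _⟩
      have := F.color_inj (F.root (Fin.last m)) (.inr hw) (.inl rfl) (h.trans hFa.symm)
      exact F.not_adj_root (Fin.last m) (F.root (Fin.last m)) (by rwa [this] at hw)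
    obtain ⟨G, ι, hι, hG⟩ := exists_isGraft_of_top F (S.orderEmbOfFin rfl)
      (S.orderEmbOfFin rfl).injective (fun i => by rw [hrange]; simp [S])
    refine ⟨⟨⟨S, hS⟩, ⟨G, fun i => ?_, fun j => ?_⟩⟩, ι, hι⟩
    · have := hι.card_color i
      rw [hF1, hlam, hFa] at this
      exact (Nat.add_right_cancel this).symm
    · induction j using Fin.addCases with
      | left j => rw [← hι.color_eq, ← hι.root_old, hF2, graftColors, Fin.append_left]
      | right j => rw [hG, graftColors, Fin.append_right]
  · rintro ⟨⟨S, hS⟩, G⟩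
    have hSa : a ∉ S := fun h => by
      simpa using Finset.mem_powerset.1 hS h
    obtain ⟨F, ι, hι, hF⟩ := exists_isGraft_of_bottom G.1 a (S.orderEmbOfFin rfl)
      (S.orderEmbOfFin rfl).injective
      (fun j h => hSa (h ▸ Finset.orderEmbOfFin_mem S rfl j)) (hnew S G)
    refine ⟨⟨F, fun i => ?_, fun j => ?_⟩, ι, hι⟩
    · rw [hι.card_color, G.2.1, hF, hlam]
    · induction j using Fin.lastCases with
      | last => rw [hF, hc]
      | cast j => rw [hι.root_old, hι.color_eq, G.2.2, graftColors, Fin.append_left]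
  · rintro F ⟨⟨S, hS⟩, G⟩ F' ⟨⟨S', hS'⟩, G'⟩ ⟨ι, hι⟩ ⟨ι', hι'⟩
    dsimp only at hι hι'
    constructor
    · intro hFF
      have hmem : ∀ i, i ∈ S ↔ ∃ w, F.1.adj (F.1.root (Fin.last m)) w ∧ F.1.color w = i :=
        fun i => by rw [hι.range_color, ← hrange]; simp only [hnew]
      have hmem' : ∀ i, i ∈ S' ↔
          ∃ w, F'.1.adj (F'.1.root (Fin.last m)) w ∧ F'.1.color w = i :=
        fun i => by rw [hι'.range_color, ← hrange]; simp only [hnew]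
      obtain rfl : S = S' := by
        ext i
        rw [hmem, hmem']
        obtain ⟨e, h1, h2, h3⟩ := hFF
        refine e.exists_congr fun w => ?_
        rw [h1, h2, h3]
      exact ⟨rfl, hι.iso_of_iso_graft hι' (S.orderEmbOfFin rfl).injective (hnew S G) (hnew S G')
        hFF⟩
    · rintro ⟨h, hGG⟩
      obtain rfl : S = S' := congrArg Subtype.val h
      exact hι.iso_of_iso hι' ((F.2.2 _).trans (F'.2.2 _).symm) hGG

/-- The recurrence `f_{λ,c̲} = Σ_{S ⊆ {1,…,k-1}} f_{λ−ε_k, c̲(S)}`, for `c_m = k`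
and `λ, c̲` satisfying the inequalities (the color `k` is the last element
`⟨k-1,_⟩` of `Fin k`; `c̲(S)` appends the elements of `S` in increasing order to
`(c_1,…,c_{m-1})`). -/
theorem statement10 (k m : ℕ) (hk : 1 ≤ k) (hm : 1 ≤ m)
    (lam : Fin k → ℕ) (c : Fin m → Fin k)
    (hcm : c ⟨m - 1, by omega⟩ = ⟨k - 1, by omega⟩)
    (hcond : ∀ i : Fin k, rootColorCount c i ≤ lam i ∧
      (lam i : ℤ) - (rootColorCount c i : ℤ) ≤ (∑ j, (lam j : ℤ)) - (lam i : ℤ)) :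
    forestCount k m lam c =
      ∑ S ∈ (Finset.univ.erase (⟨k - 1, by omega⟩ : Fin k)).powerset,
        forestCount k (m - 1 + S.card)
          (Function.update lam ⟨k - 1, by omega⟩ (lam ⟨k - 1, by omega⟩ - 1))
          (fun j => if h : (j : ℕ) < m - 1 then c ⟨(j : ℕ), by omega⟩
            else (S.sort (· ≤ ·))[(j : ℕ) - (m - 1)]'(by
              have hj := j.isLt
              simp only [Finset.length_sort]
              omega)) := by
  obtain ⟨m, rfl⟩ : ∃ m', m = m' + 1 := ⟨m - 1, by omega⟩
  set a : Fin k := ⟨k - 1, by omega⟩ with ha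
  have hcm' : c (Fin.last m) = a := hcm
  -- The last root has color `a`, so `lam a` is positive and the subtraction below is genuine.
  have hpos : 1 ≤ lam a := by
    refine le_trans ?_ (hcond a).1
    exact Finset.card_pos.2 ⟨Fin.last m, by simp [hcm']⟩
  set lam' := Function.update lam a (lam a - 1) with hlam'
  have hlam : ∀ i, lam i = lam' i + if a = i then 1 else 0 := by
    intro i
    by_cases h : a = i
    · subst h
      simp [hlam', hpos]
    · simp [hlam', h, Function.update_of_ne (Ne.symm h)]
  have hsum : ∑ i, lam i = ∑ i, lam' i + 1 := by
    simp only [hlam, Finset.sum_add_distrib]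
    simp
  rw [forestCount_eq k (m + 1) _ lam c hsum, card_quotient_recurrence lam lam' c a hcm' hlam]
  refine Finset.sum_congr rfl fun S _ => ?_
  rw [← forestCount_eq k _ _ lam' _ rfl]
  refine congrArg (forestCount k (m + S.card) lam') (funext fun j => ?_)
  induction j using Fin.addCases with
  | left j =>
    rw [graftColors, Fin.append_left]
    simp
    rfl
  | right j =>
    rw [graftColors, Fin.append_right, Finset.orderEmbOfFin_apply]
    simp
end

section
/- Fix k ∈ ℕ and c ∈ {1,…,k}, and define t̂_{λ,c} := t_{λ,c} for λ ∈ (ℤ≥0)^k with |λ| > 0, and t̂_{0,c} := 1 (counting the empty tree). Then: (a) if λ_c = 0, then t̂_{λ,c} = 1 if λ = 0 and t̂_{λ,c} = 0 otherwise; (b) if λ_c > 0, then t̂_{λ,c} = Σ Π_{i ∈ {1,…,k}, i ≠ c} t̂_{μ^{(i)}, c}, where the sum is over all tuples (μ^{(i)})_{i ≠ c} of elements of (ℤ≥0)^k satisfying Σ_{i ≠ c} (i c)·μ^{(i)} = λ − ε_c; here (i c)·μ denotes μ with its i-th and c-th entries swapped, and ε_c is the c-th standard basis vector. -/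
/- `t_{λ,c}`: the number of isomorphism classes of `(λ,c)`-trees. -/
noncomputable def treeCount (k : ℕ) (lam : Fin k → ℕ) (c : Fin k) : ℕ :=
  forestCount k 1 lam (fun _ => c)

/- `t̂_{λ,c}`: equal to `t_{λ,c}` for `|λ| > 0`, and `t̂_{0,c} = 1` (the empty
tree). -/
noncomputable def tHat (k : ℕ) (lam : Fin k → ℕ) (c : Fin k) : ℕ :=
  if ∑ i, lam i = 0 then 1 else treeCount k lam c

/-! ### Word trees -/

/-- A possibly empty injectively colored tree with root color `c`, encoded by its set of color
words. The word of a vertex lists the colors met on the way from the vertex up to the root, so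
its head is the color of the vertex, its tail is the word of the parent, and its last letter is
`c`. The empty set encodes the empty tree. -/
structure IsWordTree {k : ℕ} (c : Fin k) (S : Finset (List (Fin k))) : Prop where
  last : ∀ w ∈ S, w.getLast? = some c
  chain : ∀ w ∈ S, w.IsChain (· ≠ ·)
  tail : ∀ a b w, a :: b :: w ∈ S → b :: w ∈ S

/-- The number of vertices of color `i` in a word tree. -/
def wordCount {k : ℕ} (S : Finset (List (Fin k))) (i : Fin k) : ℕ :=
  (S.filter (fun w => w.head? = some i)).card

/-- Word trees with root color `c` and `lam i` vertices of color `i`. -/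
abbrev WordTree {k : ℕ} (c : Fin k) (lam : Fin k → ℕ) : Type :=
  {S : Finset (List (Fin k)) // IsWordTree c S ∧ ∀ i, wordCount S i = lam i}

theorem IsWordTree.card_eq {k : ℕ} {c : Fin k} {S : Finset (List (Fin k))} (h : IsWordTree c S) :
    S.card = ∑ i, wordCount S i := by
  have h1 : Set.MapsTo (fun w : List (Fin k) => w.head?) (S : Set (List (Fin k)))
      ((Finset.univ.image (some : Fin k → Option (Fin k)) : Finset _) : Set (Option (Fin k))) := by
    intro w hw
    cases w with
    | nil => simpa using h.last _ hw
    | cons a w => simp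
  rw [Finset.card_eq_sum_card_fiberwise h1,
    Finset.sum_image (Set.injOn_of_injective (Option.some_injective _))]
  rfl

theorem IsWordTree.root_mem {k : ℕ} {c : Fin k} {S : Finset (List (Fin k))} (h : IsWordTree c S)
    (w : List (Fin k)) (hw : w ∈ S) : [c] ∈ S := by
  induction w with
  | nil => simpa using h.last _ hw
  | cons a w ih =>
    cases w with
    | nil =>
      have := h.last _ hw
      simp only [List.getLast?_singleton, Option.some.injEq] at this
      rwa [← this]
    | cons b w => exact ih (h.tail _ _ _ hw)

/-! ### The words of a rooted tree -/

/-- `Reach F w v` says that some walk from the root to `v` has color sequence `w`, read from `v`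
back to the root. -/
inductive Reach {k n : ℕ} (F : CForest k 1 n) : List (Fin k) → Fin n → Prop
  | root : Reach F [F.color (F.root 0)] (F.root 0)
  | step {w v u} : Reach F w v → F.adj v u → Reach F (F.color u :: w) u

namespace Reach
variable {k n : ℕ} {F G : CForest k 1 n}

theorem exists_path {w : List (Fin k)} {v : Fin n} (h : Reach F w v) :
    ∃ p : List (Fin n), (p.IsChain F.adj ∧ (∃ j : Fin 1, p.head? = some (F.root j)) ∧
      p.getLast? = some v) ∧ w = (p.map F.color).reverse := by
  induction h with
  | root => exact ⟨[F.root 0], by simp⟩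
  | @step w v u _ ha ih =>
    obtain ⟨p, ⟨h1, ⟨j, h2⟩, h3⟩, rfl⟩ := ih
    refine ⟨p ++ [u], ⟨?_, ⟨j, ?_⟩, by simp⟩, by simp⟩
    · rw [List.isChain_append]
      refine ⟨h1, by simp, ?_⟩
      intro x hx y hy
      simp_all
    · simp [List.head?_append, h2]

theorem of_path (p : List (Fin n)) : ∀ v, p.IsChain F.adj →
    (∃ j : Fin 1, p.head? = some (F.root j)) → p.getLast? = some v → Reach F (p.map F.color).reverse v := by
  induction p using List.reverseRecOn with
  | nil => simp
  | append_singleton p u ih =>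
    intro v h1 ⟨j, h2⟩ h3
    have huv : u = v := by simpa using h3
    subst huv
    obtain rfl : j = 0 := Subsingleton.elim _ _
    rw [List.isChain_append] at h1
    rcases hp : p.getLast? with _ | x
    · rw [List.getLast?_eq_none_iff] at hp
      subst hp
      have : u = F.root 0 := by simpa using h2
      subst this
      simpa using Reach.root
    · have hne : p ≠ [] := by rintro rfl; simp at hp
      have h4 : p.head? = some (F.root 0) := by
        cases p with
        | nil => exact absurd rfl hne
        | cons a p => simpa using h2
      have := ih x h1.1 ⟨0, h4⟩ hp
      have ha : F.adj x u := h1.2.2 x (by simp [hp]) u (by simp)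
      simpa using Reach.step this ha

theorem exists_word (F : CForest k 1 n) (v : Fin n) : ∃ w, Reach F w v := by
  obtain ⟨p, ⟨h1, h2, h3⟩, -⟩ := F.path_unique v
  exact ⟨_, of_path p v h1 h2 h3⟩

theorem word_unique {w w' : List (Fin k)} {v : Fin n} (h : Reach F w v) (h' : Reach F w' v) :
    w = w' := by
  obtain ⟨p, hp, rfl⟩ := h.exists_path
  obtain ⟨q, hq, rfl⟩ := h'.exists_path
  rw [(F.path_unique v).unique hp hq]

theorem head_eq {w : List (Fin k)} {v : Fin n} (h : Reach F w v) : w.head? = some (F.color v) := by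
  cases h <;> simp

theorem not_nil {v : Fin n} : ¬ Reach F [] v := fun h => by simpa using h.head_eq

/-- Siblings have distinct colors, so a vertex is determined by its word. -/
theorem vertex_unique {w : List (Fin k)} {v : Fin n} (h : Reach F w v) :
    ∀ {v'}, Reach F w v' → v = v' := by
  induction h with
  | root =>
    intro v' h'
    generalize hw : [F.color (F.root 0)] = w at h'
    cases h' with
    | root => rfl
    | step h1 h2 =>
      simp only [List.cons.injEq] at hw
      rw [← hw.2] at h1
      exact absurd h1 not_nil
  | @step w v u h1 h2 ih =>
    intro v' h'
    generalize hw : F.color u :: w = w' at h'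
    cases h' with
    | root =>
      simp only [List.cons.injEq] at hw
      rw [hw.2] at h1
      exact absurd h1 not_nil
    | @step w2 v2 _ h3 h4 =>
      simp only [List.cons.injEq] at hw
      obtain ⟨hc, rfl⟩ := hw
      obtain rfl := ih h3
      exact F.color_inj v (Or.inr h2) (Or.inr h4) hc

theorem last_eq {w : List (Fin k)} {v : Fin n} (h : Reach F w v) :
    w.getLast? = some (F.color (F.root 0)) := by
  induction h with
  | root => simp
  | @step w v u h1 h2 ih =>
    cases w with
    | nil => simp at ih
    | cons a w => simpa using ih

theorem isChain {w : List (Fin k)} {v : Fin n} (h : Reach F w v) : w.IsChain (· ≠ ·) := by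
  induction h with
  | root => simp
  | @step w v u h1 h2 ih =>
    have hh := h1.head_eq
    cases w with
    | nil => simp at hh
    | cons a w =>
      obtain rfl : a = F.color v := by simpa using hh
      refine List.isChain_cons_cons.2 ⟨fun hc => ?_, ih⟩
      -- a loop at `v` would give `v` two words of different length
      obtain rfl : u = v := F.color_inj v (Or.inr h2) (Or.inl rfl) hc
      have := congrArg List.length (word_unique h1 (h1.step h2))
      simp at this

theorem of_cons {a : Fin k} {w : List (Fin k)} {u : Fin n} (h : Reach F (a :: w) u)
    (hw : w ≠ []) : ∃ v, Reach F w v ∧ F.adj v u := by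
  cases h with
  | root => exact absurd rfl hw
  | step h1 h2 => exact ⟨_, h1, h2⟩

theorem adj_iff {w w' : List (Fin k)} {v u : Fin n} (h : Reach F w v) (h' : Reach F w' u) :
    F.adj v u ↔ ∃ a, w' = a :: w := by
  constructor
  · intro ha
    exact ⟨_, word_unique h' (h.step ha)⟩
  · rintro ⟨a, rfl⟩
    obtain ⟨v', h1, h2⟩ := h'.of_cons (by rintro rfl; exact not_nil h)
    rwa [vertex_unique h h1]

theorem map {e : Fin n ≃ Fin n} (h1 : ∀ v w : Fin n, F.adj v w ↔ G.adj (e v) (e w))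
    (h2 : ∀ j : Fin 1, e (F.root j) = G.root j) (h3 : ∀ v : Fin n, G.color (e v) = F.color v)
    {w : List (Fin k)} {v : Fin n} (h : Reach F w v) : Reach G w (e v) := by
  induction h with
  | root => rw [← h3, h2]; exact .root
  | @step w v u _ ha ih => rw [← h3]; exact ih.step ((h1 _ _).1 ha)

end Reach

/-- The word of a vertex of a rooted tree. -/
noncomputable def vertexWord {k n : ℕ} (F : CForest k 1 n) (v : Fin n) : List (Fin k) :=
  (Reach.exists_word F v).choose

theorem reach_vertexWord {k n : ℕ} (F : CForest k 1 n) (v : Fin n) : Reach F (vertexWord F v) v :=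
  (Reach.exists_word F v).choose_spec

theorem vertexWord_eq {k n : ℕ} {F : CForest k 1 n} {w : List (Fin k)} {v : Fin n}
    (h : Reach F w v) : vertexWord F v = w :=
  (reach_vertexWord F v).word_unique h

theorem vertexWord_injective {k n : ℕ} (F : CForest k 1 n) : Function.Injective (vertexWord F) := by
  intro v v' h
  exact (reach_vertexWord F v).vertex_unique (h ▸ reach_vertexWord F v')

/-- The set of all words of a rooted tree. -/
noncomputable def wordSet {k n : ℕ} (F : CForest k 1 n) : Finset (List (Fin k)) :=
  Finset.univ.image (vertexWord F)

theorem mem_wordSet {k n : ℕ} {F : CForest k 1 n} {w : List (Fin k)} :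
    w ∈ wordSet F ↔ ∃ v, Reach F w v := by
  simp only [wordSet, Finset.mem_image, Finset.mem_univ, true_and]
  constructor
  · rintro ⟨v, rfl⟩
    exact ⟨v, reach_vertexWord F v⟩
  · rintro ⟨v, h⟩
    exact ⟨v, vertexWord_eq h⟩

theorem isWordTree_wordSet {k n : ℕ} (F : CForest k 1 n) :
    IsWordTree (F.color (F.root 0)) (wordSet F) where
  last w hw := (mem_wordSet.1 hw).choose_spec.last_eq
  chain w hw := (mem_wordSet.1 hw).choose_spec.isChain
  tail a b w hw := by
    obtain ⟨u, hu⟩ := mem_wordSet.1 hw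
    obtain ⟨v, hv, -⟩ := hu.of_cons (by simp)
    exact mem_wordSet.2 ⟨v, hv⟩

theorem wordCount_wordSet {k n : ℕ} (F : CForest k 1 n) (i : Fin k) :
    wordCount (wordSet F) i = (Finset.univ.filter (fun v => F.color v = i)).card := by
  rw [wordCount, wordSet, Finset.filter_image,
    Finset.card_image_of_injective _ (vertexWord_injective F)]
  congr 1
  ext v
  simp [(reach_vertexWord F v).head_eq]

/-- A rooted tree is determined up to isomorphism by its set of words. -/
theorem iso_iff_wordSet_eq {k n : ℕ} (F G : CForest k 1 n) :
    F.Iso G ↔ wordSet F = wordSet G := by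
  constructor
  · rintro ⟨e, h1, h2, h3⟩
    refine Finset.eq_of_subset_of_card_le ?_ ?_
    · intro w hw
      obtain ⟨v, hv⟩ := mem_wordSet.1 hw
      exact mem_wordSet.2 ⟨_, hv.map h1 h2 h3⟩
    · simp [wordSet, Finset.card_image_of_injective _ (vertexWord_injective _)]
  · intro h
    have key : ∀ v, ∃ u, Reach G (vertexWord F v) u := fun v =>
      mem_wordSet.1 (h ▸ mem_wordSet.2 ⟨v, reach_vertexWord F v⟩)
    choose f hf using key
    have hinj : Function.Injective f := by
      intro v v' hv
      refine vertexWord_injective F ((hf v).word_unique ?_)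
      rw [hv]
      exact hf v'
    have hcol : ∀ v, G.color (f v) = F.color v := fun v => by
      have h1 := (hf v).head_eq
      rw [(reach_vertexWord F v).head_eq] at h1
      exact (Option.some.inj h1).symm
    refine ⟨Equiv.ofBijective f (Finite.injective_iff_bijective.1 hinj), ?_, ?_, hcol⟩
    · intro v u
      exact ((reach_vertexWord F v).adj_iff (reach_vertexWord F u)).trans
        ((hf v).adj_iff (hf u)).symm
    · intro j
      obtain rfl : j = 0 := Subsingleton.elim _ _
      have h1 := hf (F.root 0)
      rw [vertexWord_eq Reach.root] at h1
      have h2 := h1.last_eq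
      simp only [List.getLast?_singleton, Option.some.injEq] at h2
      rw [h2] at h1
      exact h1.vertex_unique Reach.root

/-! ### The rooted tree of a word tree -/

section Build
variable {k n : ℕ} {c : Fin k} {S : Finset (List (Fin k))}

theorem IsWordTree.ne_nil (h : IsWordTree c S) {w : List (Fin k)} (hw : w ∈ S) : w ≠ [] := by
  rintro rfl
  simpa using h.last _ hw

/-- A nonempty word tree with `n` words, as a rooted tree on `Fin n`: parents are tails, colors are
heads. -/
noncomputable def buildTree (h : IsWordTree c S) (hc : [c] ∈ S) (e : Fin n ≃ S) :
    CForest k 1 n where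
  adj v u := ∃ a, (e u : List (Fin k)) = a :: (e v : List (Fin k))
  root _ := e.symm ⟨[c], hc⟩
  color v := (e v : List (Fin k)).head (h.ne_nil (e v).2)
  root_inj := Function.injective_of_subsingleton _
  path_unique := by
    have hpar : ∀ {v v' u : Fin n}, (∃ a, (e u : List (Fin k)) = a :: (e v : List (Fin k))) →
        (∃ a, (e u : List (Fin k)) = a :: (e v' : List (Fin k))) → v = v' := by
      rintro v v' u ⟨a, h1⟩ ⟨b, h2⟩
      rw [h1, List.cons.injEq] at h2
      exact e.injective (Subtype.ext h2.2)
    have hroot : ∀ v : Fin n,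
        ¬ ∃ a, (e (e.symm ⟨[c], hc⟩) : List (Fin k)) = a :: (e v : List (Fin k)) := by
      rintro v ⟨a, h1⟩
      simp only [Equiv.apply_symm_apply, List.cons.injEq] at h1
      exact h.ne_nil (e v).2 h1.2.symm
    intro v
    refine existsUnique_of_exists_of_unique ?_ ?_
    · have hex : ∀ (w : List (Fin k)) (v : Fin n), (e v : List (Fin k)) = w →
          ∃ p : List (Fin n),
            p.IsChain (fun v u => ∃ a, (e u : List (Fin k)) = a :: (e v : List (Fin k))) ∧
            (∃ j : Fin 1, p.head? = some (e.symm ⟨[c], hc⟩)) ∧ p.getLast? = some v := by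
        intro w
        induction w with
        | nil => exact fun v hv => absurd hv (h.ne_nil (e v).2)
        | cons a w ih =>
          intro v hv
          cases w with
          | nil =>
            have hl := h.last _ (e v).2
            rw [hv, List.getLast?_singleton, Option.some.injEq] at hl
            subst hl
            have : v = e.symm ⟨[a], hc⟩ := by
              rw [Equiv.eq_symm_apply]; exact Subtype.ext hv
            exact ⟨[v], by simp, ⟨0, by simp [this]⟩, by simp⟩
          | cons b w =>
            have hm : b :: w ∈ S := h.tail a b w (hv ▸ (e v).2)
            obtain ⟨p, h1, ⟨j, h2⟩, h3⟩ := ih (e.symm ⟨b :: w, hm⟩) (by simp)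
            refine ⟨p ++ [v], ?_, ⟨j, by simp [List.head?_append, h2]⟩, by simp⟩
            rw [List.isChain_append]
            refine ⟨h1, by simp, ?_⟩
            intro x hx y hy
            obtain rfl : e.symm ⟨b :: w, hm⟩ = x := by simpa [h3] using hx
            obtain rfl : v = y := by simpa using hy
            exact ⟨a, by simpa using hv⟩
      exact hex _ v rfl
    · -- reading a path backwards from `v`, each vertex is the parent of the one before it
      intro p
      induction p using List.reverseRecOn generalizing v with
      | nil => rintro q ⟨-, -, h3⟩; simp at h3
      | append_singleton p u ih =>
        rintro q ⟨h1, ⟨j, h2⟩, h3⟩ ⟨h4, ⟨j', h5⟩, h6⟩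
        rcases List.eq_nil_or_concat q with rfl | ⟨q, u', rfl⟩
        · simp at h6
        rw [List.concat_eq_append] at h4 h5 h6 ⊢
        obtain rfl : u = v := by simpa using h3
        obtain rfl : u' = u := by simpa using h6
        have h1' := List.isChain_append.1 h1
        have h4' := List.isChain_append.1 h4
        rcases hp : p.getLast? with _ | x <;> rcases hq : q.getLast? with _ | y
        · rw [List.getLast?_eq_none_iff] at hp hq
          rw [hp, hq]
        · rw [List.getLast?_eq_none_iff] at hp
          subst hp
          have hu : u' = e.symm ⟨[c], hc⟩ := by simpa using h2
          have := h4'.2.2 y (by simp [hq]) u' (by simp)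
          rw [hu] at this
          exact absurd this (hroot y)
        · rw [List.getLast?_eq_none_iff] at hq
          subst hq
          have hu : u' = e.symm ⟨[c], hc⟩ := by simpa using h5
          have := h1'.2.2 x (by simp [hp]) u' (by simp)
          rw [hu] at this
          exact absurd this (hroot x)
        · have hx := h1'.2.2 x (by simp [hp]) u' (by simp)
          have hy := h4'.2.2 y (by simp [hq]) u' (by simp)
          obtain rfl : x = y := hpar hx hy
          congr 1
          refine ih x q ⟨h1'.1, ⟨j, ?_⟩, hp⟩ ⟨h4'.1, ⟨j', ?_⟩, hq⟩
          · cases p with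
            | nil => simp at hp
            | cons a p => simpa using h2
          · cases q with
            | nil => simp at hq
            | cons a q => simpa using h5
  color_inj := by
    have hne : ∀ v u : Fin n, (∃ a, (e u : List (Fin k)) = a :: (e v : List (Fin k))) →
        (e v : List (Fin k)).head (h.ne_nil (e v).2) ≠
          (e u : List (Fin k)).head (h.ne_nil (e u).2) := by
      rintro v u ⟨a, ha⟩
      have hch := h.chain _ (e u).2
      have hv := h.ne_nil (e v).2
      generalize_proofs p1 p2
      generalize (e v : List (Fin k)) = w at *
      generalize (e u : List (Fin k)) = w' at *
      subst ha
      cases w with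
      | nil => exact absurd rfl hv
      | cons b w => simpa using (List.isChain_cons_cons.1 hch).1.symm
    rintro v x (rfl | hx) y (rfl | hy) hxy
    · rfl
    · exact absurd hxy (hne _ _ hy)
    · exact absurd hxy.symm (hne _ _ hx)
    · obtain ⟨a, ha⟩ := hx
      obtain ⟨b, hb⟩ := hy
      refine e.injective (Subtype.ext ?_)
      simp only [ha, hb, List.head_cons] at hxy
      rw [ha, hb, hxy]

theorem reach_buildTree (h : IsWordTree c S) (hc : [c] ∈ S) (e : Fin n ≃ S)
    (w : List (Fin k)) : ∀ v, (e v : List (Fin k)) = w → Reach (buildTree h hc e) w v := by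
  have hcol : ∀ v, (buildTree h hc e).color v = (e v : List (Fin k)).head (h.ne_nil (e v).2) :=
    fun _ => rfl
  induction w with
  | nil => exact fun v hv => absurd hv (h.ne_nil (e v).2)
  | cons a w ih =>
    intro v hv
    have ha : a = (buildTree h hc e).color v := by simp [hcol, hv]
    cases w with
    | nil =>
      have hl := h.last _ (e v).2
      rw [hv, List.getLast?_singleton, Option.some.injEq] at hl
      subst hl
      have : v = (buildTree h hc e).root 0 := by
        change v = e.symm ⟨[a], hc⟩
        rw [Equiv.eq_symm_apply]; exact Subtype.ext hv
      have hr := Reach.root (F := buildTree h hc e)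
      rw [← this, ← ha] at hr
      exact hr
    | cons b w =>
      have hm : b :: w ∈ S := h.tail a b w (hv ▸ (e v).2)
      rw [ha]
      refine (ih (e.symm ⟨b :: w, hm⟩) (by simp)).step ?_
      exact ⟨a, by simpa using hv⟩

theorem wordSet_buildTree (h : IsWordTree c S) (hc : [c] ∈ S) (e : Fin n ≃ S) :
    wordSet (buildTree h hc e) = S := by
  ext w
  rw [mem_wordSet]
  constructor
  · rintro ⟨v, hv⟩
    rw [hv.word_unique (reach_buildTree h hc e _ v rfl)]
    exact (e v).2
  · intro hw
    exact ⟨e.symm ⟨w, hw⟩, reach_buildTree h hc e _ _ (by simp)⟩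

end Build

/-! ### Counting trees by words -/

instance {k m n : ℕ} : Finite (CForest k m n) := by
  refine Finite.of_injective
    (β := (Fin n → Fin n → Prop) × (Fin m → Fin n) × (Fin n → Fin k))
    (fun F => (F.adj, F.root, F.color)) ?_
  rintro ⟨⟩ ⟨⟩ h
  simp only [Prod.mk.injEq] at h
  obtain ⟨rfl, rfl, rfl⟩ := h
  rfl

/-- Isomorphism classes of trees correspond to word trees. This fails for `lam = 0`, where there is
no rooted tree but the empty word tree exists. -/
theorem nonempty_equiv_wordTree {k : ℕ} (c : Fin k) (lam : Fin k → ℕ) (h0 : ∑ i, lam i ≠ 0) :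
    Nonempty (Quot (fun F G : {F : CForest k 1 (∑ i, lam i) //
      (∀ i : Fin k, (Finset.univ.filter (fun v => F.color v = i)).card = lam i) ∧
      (∀ j : Fin 1, F.color (F.root j) = c)} => CForest.Iso F.1 G.1) ≃ WordTree c lam) := by
  refine ⟨Equiv.ofBijective (Quot.lift (fun F => ⟨wordSet F.1, ?_, ?_⟩) ?_) ⟨?_, ?_⟩⟩
  · have := isWordTree_wordSet F.1
    rwa [F.2.2 0] at this
  · intro i
    rw [wordCount_wordSet, F.2.1 i]
  · intro F G h
    exact Subtype.ext ((iso_iff_wordSet_eq _ _).1 h)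
  · rintro ⟨F⟩ ⟨G⟩ h
    exact Quot.sound ((iso_iff_wordSet_eq _ _).2 (congrArg Subtype.val h))
  · rintro ⟨S, hS, hcount⟩
    have hcard : S.card = ∑ i, lam i := by rw [hS.card_eq]; simp only [hcount]
    obtain ⟨w, hw⟩ : S.Nonempty := by
      rw [← Finset.card_pos]; omega
    have hc := hS.root_mem w hw
    have e : Fin (∑ i, lam i) ≃ S := (S.equivFinOfCardEq hcard).symm
    have hws := wordSet_buildTree hS hc e
    refine ⟨Quot.mk _ ⟨buildTree hS hc e, ?_, ?_⟩, Subtype.ext hws⟩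
    · intro i
      rw [← wordCount_wordSet, hws, hcount]
    · intro j
      change (e (e.symm ⟨[c], hc⟩) : List (Fin k)).head _ = c
      simp

theorem wordTree_eq_empty {k : ℕ} {c : Fin k} {lam : Fin k → ℕ} (h0 : ∑ i, lam i = 0)
    (S : WordTree c lam) : S.1 = ∅ := by
  rw [← Finset.card_eq_zero, S.2.1.card_eq]
  simp only [S.2.2, h0]

instance {k : ℕ} (c : Fin k) (lam : Fin k → ℕ) : Finite (WordTree c lam) := by
  by_cases h0 : ∑ i, lam i = 0
  · have : Subsingleton (WordTree c lam) :=
      ⟨fun S T => Subtype.ext ((wordTree_eq_empty h0 S).trans (wordTree_eq_empty h0 T).symm)⟩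
    infer_instance
  · obtain ⟨e⟩ := nonempty_equiv_wordTree c lam h0
    exact Finite.of_equiv _ e

theorem isWordTree_empty {k : ℕ} (c : Fin k) : IsWordTree c ∅ :=
  ⟨by simp, by simp, by simp⟩

theorem tHat_eq_card {k : ℕ} (c : Fin k) (lam : Fin k → ℕ) :
    tHat k lam c = Nat.card (WordTree c lam) := by
  unfold tHat
  split_ifs with h0
  · symm
    rw [Nat.card_eq_one_iff_unique]
    refine ⟨⟨fun S T => Subtype.ext ((wordTree_eq_empty h0 S).trans (wordTree_eq_empty h0 T).symm)⟩,
      ⟨⟨∅, isWordTree_empty c, fun i => ?_⟩⟩⟩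
    have := (Finset.sum_eq_zero_iff.1 h0) i (Finset.mem_univ i)
    simp [wordCount, this]
  · exact Nat.card_congr (nonempty_equiv_wordTree c lam h0).some

/-! ### Decomposition at the root -/

section Graft
variable {k : ℕ} {c : Fin k}

/-- Exchanging the colors `i` and `c` in a word and appending `c`: if a tree with root color `c` is
recolored and attached below a new root of color `c`, its words change in this way. -/
def extendWord (c i : Fin k) (w : List (Fin k)) : List (Fin k) :=
  w.map (Equiv.swap i c) ++ [c]

/-- The tree with root color `c` whose subtree at the child of color `i` is `T i` with the colors
`i` and `c` exchanged; there is no such child if `T i` is empty. -/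
def graft (c : Fin k) (T : {i : Fin k // i ≠ c} → Finset (List (Fin k))) :
    Finset (List (Fin k)) :=
  {[c]} ∪ Finset.univ.biUnion (fun i => (T i).image (extendWord c i))

theorem mem_graft {T : {i : Fin k // i ≠ c} → Finset (List (Fin k))} {w : List (Fin k)} :
    w ∈ graft c T ↔ w = [c] ∨ ∃ i, ∃ u ∈ T i, extendWord c i u = w := by
  simp [graft]

theorem extendWord_injective (i : Fin k) : Function.Injective (extendWord c i) := by
  intro u v h
  exact List.map_injective_iff.2 (Equiv.injective _) (List.append_cancel_right h)

/-- The last but one letter of an extended word tells to which child it belongs. -/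
theorem extendWord_inj {i j : Fin k} {u v : List (Fin k)} (hu : u.getLast? = some c)
    (hv : v.getLast? = some c) (h : extendWord c i u = extendWord c j v) : i = j ∧ u = v := by
  have hij : i = j := by
    have h1 := congrArg List.getLast? (List.append_cancel_right h)
    simpa [hu, hv] using h1
  subst hij
  exact ⟨rfl, extendWord_injective i h⟩

theorem isChain_extendWord {i : Fin k} (hi : i ≠ c) {u : List (Fin k)}
    (hu : u.getLast? = some c) :
    (extendWord c i u).IsChain (· ≠ ·) ↔ u.IsChain (· ≠ ·) := by
  simp [extendWord, List.isChain_append, List.isChain_map, hu, hi]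

theorem IsWordTree.graft {T : {i : Fin k // i ≠ c} → Finset (List (Fin k))}
    (h : ∀ i, IsWordTree c (T i)) : IsWordTree c (graft c T) where
  last w hw := by
    rcases mem_graft.1 hw with rfl | ⟨i, u, hu, rfl⟩ <;> simp [extendWord]
  chain w hw := by
    rcases mem_graft.1 hw with rfl | ⟨i, u, hu, rfl⟩
    · simp
    · exact (isChain_extendWord i.2 ((h i).last u hu)).2 ((h i).chain u hu)
  tail a b w hw := by
    rcases mem_graft.1 hw with h1 | ⟨i, u, hu, h1⟩
    · simp at h1
    · rw [mem_graft]
      match u, hu, h1 with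
      | [], hu, _ => exact absurd rfl ((h i).ne_nil hu)
      | [x], hu, h1 =>
        left
        simp only [extendWord, List.map_cons, List.map_nil, List.cons_append, List.nil_append,
          List.cons.injEq] at h1
        rw [← h1.2.1, ← h1.2.2]
      | x :: y :: u, hu, h1 =>
        right
        refine ⟨i, y :: u, (h i).tail x y u hu, ?_⟩
        simpa [extendWord] using congrArg List.tail h1

theorem graft_inj {T T' : {i : Fin k // i ≠ c} → Finset (List (Fin k))}
    (h : ∀ i, IsWordTree c (T i)) (h' : ∀ i, IsWordTree c (T' i)) (heq : graft c T = graft c T') :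
    T = T' := by
  have key : ∀ T T' : {i : Fin k // i ≠ c} → Finset (List (Fin k)), (∀ i, IsWordTree c (T i)) →
      (∀ i, IsWordTree c (T' i)) → graft c T = graft c T' → ∀ i, T i ⊆ T' i := by
    intro T T' h h' heq i u hu
    have h1 : extendWord c i u ∈ graft c T' := heq ▸ mem_graft.2 (Or.inr ⟨i, u, hu, rfl⟩)
    rcases mem_graft.1 h1 with h2 | ⟨j, v, hv, h2⟩
    · have := (h i).ne_nil hu
      simp [extendWord, this] at h2
    · obtain ⟨h3, rfl⟩ := extendWord_inj ((h' j).last v hv) ((h i).last u hu) h2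
      rwa [← Subtype.ext h3]
  funext i
  exact (key T T' h h' heq i).antisymm (key T' T h' h heq.symm i)

/-- Cutting off the root: the words of the `i`-th part are the `u` whose extension lies in `S`. -/
theorem exists_graft {S : Finset (List (Fin k))} (h : IsWordTree c S) (hne : S.Nonempty) :
    ∃ T : {i : Fin k // i ≠ c} → Finset (List (Fin k)),
      (∀ i, IsWordTree c (T i)) ∧ graft c T = S := by
  classical
  let T : {i : Fin k // i ≠ c} → Finset (List (Fin k)) := fun i =>
    (S.preimage (extendWord c i) (extendWord_injective _).injOn).filter
      (fun u => u.getLast? = some c)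
  have hT : ∀ i u, u ∈ T i ↔ extendWord c i u ∈ S ∧ u.getLast? = some c := by
    intro i u
    simp [T]
  refine ⟨T, fun i => ⟨fun u hu => ((hT i u).1 hu).2, fun u hu => ?_, fun a b u hu => ?_⟩, ?_⟩
  · obtain ⟨h1, h2⟩ := (hT i u).1 hu
    exact (isChain_extendWord i.2 h2).1 (h.chain _ h1)
  · obtain ⟨h1, h2⟩ := (hT i _).1 hu
    refine (hT i _).2 ⟨?_, by simpa using h2⟩
    exact h.tail (Equiv.swap i.1 c a) (Equiv.swap i.1 c b) (u.map (Equiv.swap i.1 c) ++ [c]) h1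
  · ext w
    rw [mem_graft]
    constructor
    · rintro (rfl | ⟨i, u, hu, rfl⟩)
      · exact h.root_mem _ hne.choose_spec
      · exact ((hT i u).1 hu).1
    · intro hw
      have hl := h.last w hw
      have hch := h.chain w hw
      rcases List.eq_nil_or_concat w with rfl | ⟨w', x, rfl⟩
      · simp at hl
      rw [List.concat_eq_append] at *
      obtain rfl : x = c := by simpa using hl
      rcases hi : w'.getLast? with _ | i
      · rw [List.getLast?_eq_none_iff] at hi
        subst hi
        exact Or.inl rfl
      · have hne : i ≠ x := (List.isChain_append.1 hch).2.2 i (by simp [hi]) x (by simp)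
        have hext : extendWord x i (w'.map (Equiv.swap i x)) = w' ++ [x] := by
          simp [extendWord, List.map_map, ← Equiv.coe_trans]
        refine Or.inr ⟨⟨i, hne⟩, w'.map (Equiv.swap i x), (hT _ _).2 ⟨?_, ?_⟩, hext⟩
        · rw [hext]; exact hw
        · simp [hi]

/-- The exchange of `i` and `c` turns the count of color `j` in the `i`-th subtree into the count of
color `(i c) j` in `T i`; the root contributes one vertex of color `c`. -/
theorem wordCount_graft {T : {i : Fin k // i ≠ c} → Finset (List (Fin k))}
    (h : ∀ i, IsWordTree c (T i)) (j : Fin k) :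
    wordCount (graft c T) j =
      (if j = c then 1 else 0) + ∑ i, wordCount (T i) (Equiv.swap (i : Fin k) c j) := by
  rw [wordCount, graft, Finset.filter_union, Finset.card_union_of_disjoint, Finset.filter_biUnion,
    Finset.card_biUnion]
  · congr 1
    · rw [Finset.filter_singleton]
      by_cases hj : j = c
      · simp [hj]
      · have : ¬ c = j := fun h => hj h.symm
        simp [hj, this]
    · refine Finset.sum_congr rfl fun i _ => ?_
      rw [Finset.filter_image, Finset.card_image_of_injective _ (extendWord_injective _), wordCount]
      congr 1
      refine Finset.filter_congr fun u hu => ?_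
      cases u with
      | nil => exact absurd rfl ((h i).ne_nil hu)
      | cons a u => simp [extendWord, Equiv.swap_apply_eq_iff]
  · intro i _ i' _ hii
    refine Finset.disjoint_filter_filter (Finset.disjoint_left.2 fun w hw hw' => hii ?_)
    obtain ⟨u, hu, rfl⟩ := Finset.mem_image.1 hw
    obtain ⟨u', hu', h2⟩ := Finset.mem_image.1 hw'
    exact Subtype.ext (extendWord_inj ((h i').last u' hu') ((h i).last u hu) h2).1.symm
  · refine Finset.disjoint_filter_filter (Finset.disjoint_left.2 fun w hw hw' => ?_)
    obtain ⟨i, -, hw'⟩ := Finset.mem_biUnion.1 hw'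
    obtain ⟨u, hu, rfl⟩ := Finset.mem_image.1 hw'
    have := (h i).ne_nil hu
    simp [extendWord, this] at hw

/-- The tuples over which the recurrence sums: the color counts of the recolored subtrees, whose
sum, after recoloring back, is `lam` without the root. -/
abbrev CountTuple {k : ℕ} (c : Fin k) (lam : Fin k → ℕ) : Type :=
  {μ : {i : Fin k // i ≠ c} → (Fin k → ℕ) // ∀ j : Fin k,
    (∑ i : {i : Fin k // i ≠ c}, μ i (Equiv.swap (i : Fin k) c j)) =
      lam j - (if j = c then 1 else 0)}

instance (lam : Fin k → ℕ) : Finite (CountTuple c lam) := by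
  refine Finite.of_injective
    (β := {i : Fin k // i ≠ c} → (j : Fin k) → Fin (∑ i, lam i + 1))
    (fun μ i j => ⟨μ.1 i j, ?_⟩) ?_
  · have h := μ.2 (Equiv.swap (i : Fin k) c j)
    have h1 := Finset.single_le_sum
      (f := fun i' : {i : Fin k // i ≠ c} =>
        μ.1 i' (Equiv.swap (i' : Fin k) c (Equiv.swap (i : Fin k) c j)))
      (fun _ _ => Nat.zero_le _) (Finset.mem_univ i)
    have h2 := Finset.single_le_sum (f := lam) (fun _ _ => Nat.zero_le _)
      (Finset.mem_univ (Equiv.swap (i : Fin k) c j))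
    simp only [Equiv.swap_apply_self] at h1
    omega
  · intro μ ν h
    refine Subtype.ext (funext fun i => funext fun j => ?_)
    simpa using congrFun (congrFun h i) j

/-- Grafting identifies tuples of word trees, grouped by their color counts, with the word trees
that have color counts `lam`. -/
theorem nonempty_equiv_sigma {lam : Fin k → ℕ} (hc : 1 ≤ lam c) :
    Nonempty ((Σ μ : CountTuple c lam, ∀ i, WordTree c (μ.1 i)) ≃ WordTree c lam) := by
  refine ⟨Equiv.ofBijective (fun x => ⟨graft c (fun i => (x.2 i).1),
    IsWordTree.graft fun i => (x.2 i).2.1, fun j => ?_⟩) ⟨?_, ?_⟩⟩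
  · rw [wordCount_graft fun i => (x.2 i).2.1]
    simp only [(x.2 _).2.2]
    rw [x.1.2 j]
    split_ifs with hj
    · subst hj; omega
    · omega
  · rintro ⟨⟨μ, hμ⟩, T⟩ ⟨⟨ν, hν⟩, T'⟩ h
    have h1 : (fun i => (T i).1) = fun i => (T' i).1 :=
      graft_inj (fun i => (T i).2.1) (fun i => (T' i).2.1) (congrArg Subtype.val h)
    obtain rfl : μ = ν := by
      funext i j
      exact ((T i).2.2 j).symm.trans
        ((congrArg (wordCount · j) (congrFun h1 i)).trans ((T' i).2.2 j))
    obtain rfl : T = T' := funext fun i => Subtype.ext (congrFun h1 i)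
    rfl
  · rintro ⟨S, hS, hcount⟩
    have hne : S.Nonempty := by
      rw [Finset.nonempty_iff_ne_empty]
      rintro rfl
      have := hcount c
      simp [wordCount] at this
      omega
    obtain ⟨T, hT, rfl⟩ := exists_graft hS hne
    refine ⟨⟨⟨fun i j => wordCount (T i) j, fun j => ?_⟩, fun i => ⟨T i, hT i, fun _ => rfl⟩⟩, rfl⟩
    have := wordCount_graft hT j
    rw [hcount] at this
    rw [this, Nat.add_sub_cancel_left]

end Graft

theorem tHat_eq_sum {k : ℕ} {c : Fin k} {lam : Fin k → ℕ} (hc : 1 ≤ lam c) :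
    tHat k lam c = ∑ᶠ μ : CountTuple c lam, ∏ i, tHat k (μ.1 i) c := by
  have := Fintype.ofFinite (CountTuple c lam)
  rw [finsum_eq_sum_of_fintype, tHat_eq_card, ← Nat.card_congr (nonempty_equiv_sigma hc).some,
    Nat.card_sigma]
  simp only [Nat.card_pi, tHat_eq_card]

theorem tHat_of_eq_zero {k : ℕ} {c : Fin k} {lam : Fin k → ℕ} (hc : lam c = 0) :
    tHat k lam c = if ∀ i, lam i = 0 then 1 else 0 := by
  split_ifs with h
  · simp [tHat, h]
  · rw [tHat_eq_card]
    have : IsEmpty (WordTree c lam) := by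
      refine ⟨fun ⟨S, hS, hcount⟩ => h fun i => ?_⟩
      rcases S.eq_empty_or_nonempty with rfl | ⟨w, hw⟩
      · rw [← hcount]; simp [wordCount]
      · -- a nonempty tree contains its root, of color `c`
        have h1 := hcount c
        rw [hc, wordCount, Finset.card_filter_eq_zero_iff] at h1
        exact absurd (by simp) (h1 _ (hS.root_mem w hw))
    exact Nat.card_of_isEmpty

/-- (a) If `λ_c = 0` then `t̂_{λ,c} = δ_{λ,0}`.  (b) If `λ_c > 0` then
`t̂_{λ,c} = Σ Π_{i ≠ c} t̂_{μ^{(i)},c}`, the (finitely supported) sum over all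
tuples `(μ^{(i)})_{i ≠ c}` with `Σ_{i ≠ c} (i c)·μ^{(i)} = λ − ε_c`, where
`((i c)·μ)_j = μ_{(i c)(j)}` swaps the `i`-th and `c`-th entries. -/
theorem statement11 (k : ℕ) (hk : 1 ≤ k) (c : Fin k) (lam : Fin k → ℕ) :
    (lam c = 0 → tHat k lam c = if ∀ i, lam i = 0 then 1 else 0) ∧
    (1 ≤ lam c →
      tHat k lam c =
        ∑ᶠ μ : {i : Fin k // i ≠ c} → (Fin k → ℕ),
          if ∀ j : Fin k,
              (∑ i : {i : Fin k // i ≠ c}, μ i (Equiv.swap (i : Fin k) c j)) =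
                lam j - (if j = c then 1 else 0)
          then ∏ i : {i : Fin k // i ≠ c}, tHat k (μ i) c
          else 0) := by
  refine ⟨tHat_of_eq_zero, fun hc => (tHat_eq_sum hc).trans ?_⟩
  refine (finsum_subtype_eq_finsum_cond
    (f := fun μ : {i : Fin k // i ≠ c} → (Fin k → ℕ) => ∏ i, tHat k (μ i) c) _).trans ?_
  exact finsum_congr fun μ => finsum_eq_if
end

section
/- Fix k ∈ ℕ and c ∈ {1,…,k}, and let τ̂_c(u_1,…,u_k) := Σ_{λ ∈ (ℤ≥0)^k} t̂_{λ,c} u_1^{λ_1}⋯u_k^{λ_k} be the multivariate formal power series over ℤ whose coefficients are the numbers t̂_{λ,c}. Then τ̂_c satisfies the identity of formal power series τ̂_c(u_1,…,u_k) = 1 + u_c · Π_{i ∈ {1,…,k}, i ≠ c} τ̂_c(u_{(i c)·1},…,u_{(i c)·k}), where in the i-th factor the variables u_i and u_c are interchanged ((i c) denotes the transposition of i and c acting on indices). -/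
/- The generating function `τ̂_c = Σ_λ t̂_{λ,c} u^λ`, as a multivariate formal
power series in the variables `u_1,…,u_k`; a power series is given by its
coefficient function on exponents `e : Fin k →₀ ℕ`. -/
noncomputable def tauHat (k : ℕ) (c : Fin k) : MvPowerSeries (Fin k) ℤ :=
  fun e => (tHat k (fun i => e i) c : ℤ)

/- The series `τ̂_c(u_{σ(1)},…,u_{σ(k)})` obtained from `τ̂_c` by substituting
`u_{σ(j)}` for `u_j`: its coefficient at exponent `e` is `t̂_{e ∘ σ, c}`. -/
noncomputable def tauHatPerm (k : ℕ) (c : Fin k) (σ : Equiv.Perm (Fin k)) :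
    MvPowerSeries (Fin k) ℤ :=
  fun e => (tHat k (fun i => e (σ i)) c : ℤ)

/-! ### Lists as paths -/

/-- The last vertex of the path `r :: q`. -/
def endOf {α : Type*} (r : α) (q : List α) : α := q.getLastD r

section Lists

variable {α β : Type*}

lemma endOf_nil (r : α) : endOf r [] = r := rfl

lemma endOf_concat (r a : α) (q : List α) : endOf r (q ++ [a]) = a := List.getLastD_concat

lemma endOf_cons (r a : α) (q : List α) : endOf r (a :: q) = endOf a q := List.getLastD_cons

lemma endOf_map (f : α → β) (r : α) (q : List α) :
    endOf (f r) (q.map f) = f (endOf r q) := List.getLastD_map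

lemma chain_concat {R : α → α → Prop} {r a : α} {q : List α} :
    List.IsChain R (r :: (q ++ [a])) ↔ List.IsChain R (r :: q) ∧ R (endOf r q) a := by
  induction q generalizing r with
  | nil => simp [endOf_nil]
  | cons b q ih =>
    rw [List.cons_append, List.isChain_cons_cons, List.isChain_cons_cons, ih, endOf_cons, and_assoc]

/-- The unique-path condition, with paths recorded by the vertices that follow the root. -/
lemma path_iff {n : ℕ} (adj : Fin n → Fin n → Prop) (root : Fin 1 → Fin n) (v : Fin n) :
    (∃! p : List (Fin n), List.IsChain adj p ∧ (∃ j : Fin 1, p.head? = some (root j)) ∧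
      p.getLast? = some v) ↔
    ∃! q : List (Fin n), List.IsChain adj (root 0 :: q) ∧ endOf (root 0) q = v := by
  have key : ∀ q : List (Fin n), (root 0 :: q).getLast? = some (endOf (root 0) q) := by
    intro q; rw [List.getLast?_cons, endOf, List.getLastD_eq_getLast?]
  constructor
  · rintro ⟨p, ⟨hc, ⟨j, hj⟩, hl⟩, hu⟩
    obtain rfl : j = 0 := Subsingleton.elim _ _
    cases p with
    | nil => simp at hj
    | cons a q =>
      obtain rfl : a = root 0 := by simpa using hj
      refine ⟨q, ⟨hc, by rw [key] at hl; exact Option.some.inj hl⟩, ?_⟩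
      rintro q' ⟨hc', hl'⟩
      have := hu (root 0 :: q') ⟨hc', ⟨0, rfl⟩, by rw [key, hl']⟩
      exact (List.cons.inj this).2
  · rintro ⟨q, ⟨hc, hl⟩, hu⟩
    refine ⟨root 0 :: q, ⟨hc, ⟨0, rfl⟩, by rw [key, hl]⟩, ?_⟩
    rintro p ⟨hc', ⟨j, hj⟩, hl'⟩
    obtain rfl : j = 0 := Subsingleton.elim _ _
    cases p with
    | nil => simp at hj
    | cons a q' =>
      obtain rfl : a = root 0 := by simpa using hj
      rw [hu q' ⟨hc', by rw [key] at hl'; exact Option.some.inj hl'⟩]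

end Lists

/-! ### Color words of a tree -/

namespace CForest

variable {k n : ℕ} (T : CForest k 1 n)

/-- The vertices, after the root, of the path from the root to `v`. -/
noncomputable def path (v : Fin n) : List (Fin n) :=
  ((path_iff T.adj T.root v).1 (T.path_unique v)).choose

/-- The colors, after that of the root, along the path from the root to `v`. -/
noncomputable def word (v : Fin n) : List (Fin k) := (T.path v).map T.color

lemma path_chain (v : Fin n) : List.IsChain T.adj (T.root 0 :: T.path v) :=
  ((path_iff T.adj T.root v).1 (T.path_unique v)).choose_spec.1.1

lemma path_end (v : Fin n) : endOf (T.root 0) (T.path v) = v :=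
  ((path_iff T.adj T.root v).1 (T.path_unique v)).choose_spec.1.2

lemma path_eq {v : Fin n} {q : List (Fin n)} (hc : List.IsChain T.adj (T.root 0 :: q))
    (he : endOf (T.root 0) q = v) : q = T.path v :=
  ((path_iff T.adj T.root v).1 (T.path_unique v)).choose_spec.2 q ⟨hc, he⟩

lemma path_adj {v w : Fin n} (h : T.adj v w) : T.path w = T.path v ++ [w] :=
  (T.path_eq (chain_concat.2 ⟨T.path_chain v, by rwa [path_end]⟩) (endOf_concat _ _ _)).symm

lemma word_adj {v w : Fin n} (h : T.adj v w) : T.word w = T.word v ++ [T.color w] := by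
  simp [word, T.path_adj h]

lemma adj_ne {v w : Fin n} (h : T.adj v w) : v ≠ w := by
  rintro rfl
  have := congrArg List.length (T.path_adj h)
  simp at this

lemma color_ne {v w : Fin n} (h : T.adj v w) : T.color v ≠ T.color w := fun hc =>
  T.adj_ne h (T.color_inj v (Or.inl rfl) (Or.inr h) hc)

lemma endOf_word (v : Fin n) : endOf (T.color (T.root 0)) (T.word v) = T.color v := by
  rw [word, endOf_map, path_end]

/-- An injectively colored tree has at most one path from the root with given colors. -/
lemma chain_color_inj (q : List (Fin n)) : ∀ q' : List (Fin n),
    List.IsChain T.adj (T.root 0 :: q) → List.IsChain T.adj (T.root 0 :: q') →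
    q.map T.color = q'.map T.color → q = q' := by
  induction q using List.reverseRecOn with
  | nil => intro q' _ _ h; simpa [eq_comm] using h
  | append_singleton q a ih =>
    intro q' hq hq' h
    rcases List.eq_nil_or_concat' q' with rfl | ⟨q', b, rfl⟩
    · simp at h
    · rw [chain_concat] at hq hq'
      simp only [List.map_append, List.map_cons, List.map_nil] at h
      obtain ⟨h1, h2⟩ := List.append_inj' h rfl
      obtain rfl := ih q' hq.1 hq'.1 h1
      rw [T.color_inj _ (Or.inr hq.2) (Or.inr hq'.2) (List.cons.inj h2).1]

lemma word_injective : Function.Injective T.word := fun v w h => by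
  rw [← T.path_end v, ← T.path_end w,
    T.chain_color_inj _ _ (T.path_chain v) (T.path_chain w) h]

/-- Deleting the last letter of the word of a vertex gives the word of its parent. -/
lemma exists_parent {w : Fin n} {l : List (Fin k)} {a : Fin k} (h : T.word w = l ++ [a]) :
    ∃ v, T.word v = l ∧ T.adj v w := by
  have hc := T.path_chain w
  have he := T.path_end w
  rw [word] at h
  rcases List.eq_nil_or_concat' (T.path w) with hp | ⟨q, b, hp⟩
  · simp [hp] at h
  · rw [hp] at h hc he
    rw [endOf_concat] at he
    subst he
    rw [chain_concat] at hc
    refine ⟨_, ?_, hc.2⟩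
    rw [word, ← T.path_eq hc.1 rfl]
    simp only [List.map_append, List.map_cons, List.map_nil] at h
    exact (List.append_inj' h rfl).1

lemma adj_iff {v w : Fin n} : T.adj v w ↔ ∃ a, T.word w = T.word v ++ [a] := by
  refine ⟨fun h => ⟨_, T.word_adj h⟩, ?_⟩
  rintro ⟨a, h⟩
  obtain ⟨u, hu, huw⟩ := T.exists_parent h
  rwa [← T.word_injective hu]

lemma word_root : T.word (T.root 0) = [] := by
  rw [word, ← T.path_eq (v := T.root 0) (q := []) (List.isChain_singleton _) rfl, List.map_nil]

/-- The set of color words of the vertices; it is the canonical form of the tree. -/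
noncomputable def words : Finset (List (Fin k)) := Finset.univ.image T.word

lemma words_eq_of_iso {T T' : CForest k 1 n} (h : T.Iso T') : T.words = T'.words := by
  obtain ⟨e, hadj, hroot, hcol⟩ := h
  have key : ∀ v, T'.word (e v) = T.word v := by
    intro v
    have : (T.path v).map e = T'.path (e v) := by
      apply T'.path_eq
      · rw [← hroot, ← List.map_cons, List.isChain_map]
        exact (T.path_chain v).imp fun a b => (hadj a b).1
      · rw [← hroot, endOf_map, path_end]
    rw [word, ← this, List.map_map, word]
    exact List.map_congr_left fun a _ => hcol a
  ext l
  simp only [words, Finset.mem_image, Finset.mem_univ, true_and]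
  constructor
  · rintro ⟨v, rfl⟩; exact ⟨e v, key v⟩
  · rintro ⟨v, rfl⟩; exact ⟨e.symm v, by rw [← key, e.apply_symm_apply]⟩

lemma iso_of_words_eq {T T' : CForest k 1 n} (hc : T.color (T.root 0) = T'.color (T'.root 0))
    (h : T.words = T'.words) : T.Iso T' := by
  have hex : ∀ v, ∃ v', T'.word v' = T.word v := by
    intro v
    have : T.word v ∈ T'.words := h ▸ Finset.mem_image_of_mem _ (Finset.mem_univ v)
    simpa [words] using this
  choose f hf using hex
  have hinj : Function.Injective f := fun v w hvw =>
    T.word_injective (by rw [← hf, ← hf, hvw])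
  refine ⟨Equiv.ofBijective f (Finite.injective_iff_bijective.1 hinj), ?_, ?_, ?_⟩
  · intro v w
    simp only [Equiv.ofBijective_apply, adj_iff, hf]
  · intro j
    obtain rfl : j = 0 := Subsingleton.elim _ _
    apply T'.word_injective
    simp only [Equiv.ofBijective_apply, hf, word_root]
  · intro v
    simp only [Equiv.ofBijective_apply]
    rw [← endOf_word T', ← endOf_word T, hf, hc]

end CForest

/-! ### Prefix-closed sets of color words -/

/-- The words of a (possibly empty) injectively colored tree with root color `c`: `S` is closed
under deleting the last letter, and no word `c :: l` has two equal consecutive letters. -/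
def Good {k : ℕ} (c : Fin k) (S : Finset (List (Fin k))) : Prop :=
  (∀ l ∈ S, List.IsChain (· ≠ ·) (c :: l)) ∧ ∀ l a, l ++ [a] ∈ S → l ∈ S

/-- The number of vertices of each color, the vertex of `l` being colored by the last letter of
`c :: l`. -/
noncomputable def weight {k : ℕ} (c : Fin k) (S : Finset (List (Fin k))) : Fin k →₀ ℕ :=
  ∑ l ∈ S, Finsupp.single (endOf c l) 1

lemma weight_apply {k : ℕ} (c : Fin k) (S : Finset (List (Fin k))) (i : Fin k) :
    weight c S i = (S.filter fun l => endOf c l = i).card := by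
  simp [weight, Finsupp.finsetSum_apply, Finsupp.single_apply]

lemma sum_weight {k : ℕ} (c : Fin k) (S : Finset (List (Fin k))) :
    ∑ i, weight c S i = S.card := by
  simp only [weight_apply]
  exact (Finset.card_eq_sum_card_fiberwise (fun _ _ => Finset.mem_coe.2 (Finset.mem_univ _))).symm

lemma Good.nil_mem {k : ℕ} {c : Fin k} {S : Finset (List (Fin k))} (h : Good c S)
    {l : List (Fin k)} : l ∈ S → [] ∈ S := by
  induction l using List.reverseRecOn with
  | nil => exact id
  | append_singleton l a ih => exact fun hl => ih (h.2 _ _ hl)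

lemma CForest.good_words {k n : ℕ} (T : CForest k 1 n) : Good (T.color (T.root 0)) T.words := by
  constructor
  · intro l hl
    obtain ⟨v, -, rfl⟩ := Finset.mem_image.1 hl
    rw [CForest.word, ← List.map_cons, List.isChain_map]
    exact (T.path_chain v).imp fun a b h => T.color_ne h
  · intro l a hl
    obtain ⟨v, -, hv⟩ := Finset.mem_image.1 hl
    obtain ⟨u, rfl, -⟩ := T.exists_parent hv
    exact Finset.mem_image_of_mem _ (Finset.mem_univ _)

lemma CForest.weight_words {k n : ℕ} (T : CForest k 1 n) (i : Fin k) :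
    weight (T.color (T.root 0)) T.words i =
      (Finset.univ.filter fun v => T.color v = i).card := by
  rw [weight, CForest.words, Finset.sum_image (fun a _ b _ h => T.word_injective h)]
  simp [CForest.endOf_word, Finsupp.finsetSum_apply, Finsupp.single_apply]

/-- Every nonempty good set of words is the set of words of a tree: the vertices are the words,
and the children of `l` are the words `l ++ [a]`. -/
lemma exists_tree {k n : ℕ} {c : Fin k} {S : Finset (List (Fin k))} (hS : Good c S)
    (hn : S.card = n) (h0 : [] ∈ S) :
    ∃ T : CForest k 1 n, T.color (T.root 0) = c ∧ T.words = S := by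
  let φ : Fin n ≃ S := (Fintype.equivFinOfCardEq (by simpa using hn)).symm
  let adj : Fin n → Fin n → Prop := fun v w => ∃ a, (φ w).1 = (φ v).1 ++ [a]
  let r : Fin n := φ.symm ⟨[], h0⟩
  have hr : (φ r : List (Fin k)) = [] := by simp [r]
  let color : Fin n → Fin k := fun v => endOf c (φ v)
  have hφ : ∀ {v w}, (φ v : List (Fin k)) = φ w → v = w := fun h => φ.injective (Subtype.ext h)
  have hex : ∀ l (hl : l ∈ S), ∃ q, List.IsChain adj (r :: q) ∧ endOf r q = φ.symm ⟨l, hl⟩ := by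
    intro l
    induction l using List.reverseRecOn with
    | nil => exact fun hl => ⟨[], List.isChain_singleton _, rfl⟩
    | append_singleton l a ih =>
      intro hl
      obtain ⟨q, hq, he⟩ := ih (hS.2 _ _ hl)
      exact ⟨q ++ [φ.symm ⟨_, hl⟩], chain_concat.2 ⟨hq, a, by simp [he]⟩, endOf_concat _ _ _⟩
  have huniq : ∀ q q' : List (Fin n), List.IsChain adj (r :: q) → List.IsChain adj (r :: q') →
      endOf r q = endOf r q' → q = q' := by
    -- the root has no parent, since the empty word does not end in a letter
    have hno : ∀ {v}, ¬ adj v r := by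
      rintro v ⟨a, ha⟩
      rw [hr] at ha
      simp at ha
    intro q
    induction q using List.reverseRecOn with
    | nil =>
      intro q' _ hq' he
      rcases List.eq_nil_or_concat' q' with rfl | ⟨q', b, rfl⟩
      · rfl
      · rw [endOf_nil, endOf_concat] at he
        subst he
        exact (hno (chain_concat.1 hq').2).elim
    | append_singleton q a ih =>
      intro q' hq hq' he
      rcases List.eq_nil_or_concat' q' with rfl | ⟨q', b, rfl⟩
      · rw [endOf_nil, endOf_concat] at he
        rw [he] at hq
        exact (hno (chain_concat.1 hq).2).elim
      · rw [endOf_concat, endOf_concat] at he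
        subst he
        rw [chain_concat] at hq hq'
        obtain ⟨x, hx⟩ := hq.2
        obtain ⟨y, hy⟩ := hq'.2
        rw [ih q' hq.1 hq'.1 (hφ (List.append_inj' (hx.symm.trans hy) rfl).1)]
  let T : CForest k 1 n :=
    { adj := adj
      root := fun _ => r
      color := color
      root_inj := fun a b _ => Subsingleton.elim a b
      path_unique := by
        intro v
        refine (path_iff adj (fun _ => r) v).2 ?_
        obtain ⟨q, hq, he⟩ := hex _ (φ v).2
        have he' : endOf r q = v := by simpa using he
        exact ⟨q, ⟨hq, he'⟩, fun q' h => huniq _ _ h.1 hq (h.2.trans he'.symm)⟩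
      color_inj := by
        have hne : ∀ {v w}, adj v w → color v ≠ color w := by
          rintro v w ⟨a, ha⟩
          have h := hS.1 _ (φ w).2
          simp only [color]
          rw [ha, chain_concat] at h
          rw [ha, endOf_concat]
          exact h.2
        rintro v x hx y hy hxy
        rcases hx with rfl | hx <;> rcases hy with rfl | hy
        · rfl
        · exact (hne hy hxy).elim
        · exact (hne hx hxy.symm).elim
        · obtain ⟨a, ha⟩ := hx
          obtain ⟨b, hb⟩ := hy
          simp only [color] at hxy
          rw [ha, hb, endOf_concat, endOf_concat] at hxy
          exact hφ (by rw [ha, hb, hxy]) }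
  have hrc : T.color (T.root 0) = c := by
    change endOf c (φ r) = c
    rw [hr, endOf_nil]
  have hchain : ∀ q : List (Fin n), List.IsChain adj (r :: q) →
      q.map color = φ (endOf r q) := by
    intro q
    induction q using List.reverseRecOn with
    | nil => exact fun _ => by simp [endOf_nil, hr]
    | append_singleton q a ih =>
      intro hq
      rw [chain_concat] at hq
      obtain ⟨x, hx⟩ := hq.2
      rw [List.map_append, ih hq.1, endOf_concat, hx]
      simp [color, hx, endOf_concat]
  have hword : ∀ v, T.word v = φ v := fun v => by
    have h := hchain _ (T.path_chain v)
    rw [show endOf r (T.path v) = v from T.path_end v] at h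
    exact h
  refine ⟨T, hrc, ?_⟩
  ext l
  simp only [CForest.words, Finset.mem_image, Finset.mem_univ, true_and, hword]
  exact ⟨by rintro ⟨v, rfl⟩; exact (φ v).2, fun hl => ⟨φ.symm ⟨l, hl⟩, by simp⟩⟩

/-! ### Trees up to isomorphism are good sets of words -/

instance (k m n : ℕ) : Finite (CForest k m n) := by
  refine Finite.of_injective (β := (Fin n → Fin n → Prop) × (Fin m → Fin n) × (Fin n → Fin k))
    (fun F => (F.adj, F.root, F.color)) ?_
  rintro ⟨a, r, c, _, _, _⟩ ⟨a', r', c', _, _, _⟩ h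
  simp only [Prod.mk.injEq] at h
  obtain ⟨rfl, rfl, rfl⟩ := h
  rfl

/-- The canonical forms of the trees with root color `c` and color counts `e`. -/
def canon {k : ℕ} (c : Fin k) (e : Fin k →₀ ℕ) : Set (Finset (List (Fin k))) :=
  {S | Good c S ∧ weight c S = e}

lemma card_of_mem_canon {k : ℕ} {c : Fin k} {e : Fin k →₀ ℕ} {S : Finset (List (Fin k))}
    (h : S ∈ canon c e) : S.card = ∑ i, e i := by
  rw [← h.2, sum_weight]

lemma canon_zero {k : ℕ} {c : Fin k} {e : Fin k →₀ ℕ} (he : ∑ i, e i = 0) :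
    canon c e = {∅} := by
  ext S
  constructor
  · intro h
    exact Finset.card_eq_zero.1 ((card_of_mem_canon h).trans he)
  · rintro rfl
    refine ⟨⟨by simp, by simp⟩, ?_⟩
    ext i
    simpa [weight] using ((Finset.sum_eq_zero_iff.1 he) i (Finset.mem_univ i)).symm

/-- Trees with root color `c` and color counts `e`, up to isomorphism, correspond to their sets of
color words. -/
lemma exists_equiv_canon {k : ℕ} (c : Fin k) (e : Fin k →₀ ℕ) (he : ∑ i, e i ≠ 0) :
    Nonempty (Quot (fun F G : {F : CForest k 1 (∑ i, e i) //
      (∀ i : Fin k, (Finset.univ.filter (fun v => F.color v = i)).card = e i) ∧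
      (∀ j : Fin 1, F.color (F.root j) = c)} => CForest.Iso F.1 G.1) ≃ canon c e) := by
  refine ⟨Equiv.ofBijective (Quot.lift (fun F => ⟨F.1.words, ?_, ?_⟩) ?_) ⟨?_, ?_⟩⟩
  · have h := F.1.good_words
    rwa [F.2.2 0] at h
  · ext i
    have h := F.1.weight_words i
    rwa [F.2.2 0, F.2.1 i] at h
  · intro F G h
    exact Subtype.ext (CForest.words_eq_of_iso h)
  · rintro ⟨F⟩ ⟨G⟩ h
    refine Quot.sound (CForest.iso_of_words_eq ?_ (congrArg Subtype.val h))
    rw [F.2.2 0, G.2.2 0]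
  · rintro ⟨S, hS⟩
    have hcard := card_of_mem_canon hS
    obtain ⟨l, hl⟩ := Finset.card_pos.1 (Nat.pos_of_ne_zero (hcard ▸ he))
    obtain ⟨T, hT, hw⟩ := exists_tree hS.1 hcard (hS.1.nil_mem hl)
    refine ⟨Quot.mk _ ⟨T, ?_, ?_⟩, Subtype.ext hw⟩
    · intro i
      rw [← T.weight_words, hT, hw, hS.2]
    · intro j
      rw [Subsingleton.elim j 0, hT]

lemma canon_finite {k : ℕ} (c : Fin k) (e : Fin k →₀ ℕ) : (canon c e).Finite := by
  by_cases he : ∑ i, e i = 0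
  · rw [canon_zero he]; exact Set.finite_singleton _
  · obtain ⟨φ⟩ := exists_equiv_canon c e he
    exact Set.finite_coe_iff.1 (Finite.of_equiv _ φ)

/-- `canon c e` as a finset. -/
noncomputable def canonF {k : ℕ} (c : Fin k) (e : Fin k →₀ ℕ) : Finset (Finset (List (Fin k))) :=
  (canon_finite c e).toFinset

lemma mem_canonF {k : ℕ} {c : Fin k} {e : Fin k →₀ ℕ} {S : Finset (List (Fin k))} :
    S ∈ canonF c e ↔ Good c S ∧ weight c S = e := (canon_finite c e).mem_toFinset

lemma tHat_eq {k : ℕ} (c : Fin k) (e : Fin k →₀ ℕ) :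
    tHat k (fun i => e i) c = (canonF c e).card := by
  rw [tHat]
  split_ifs with he
  · rw [canonF, ← Set.ncard_eq_toFinset_card _ (canon_finite c e), canon_zero he,
      Set.ncard_singleton]
  · obtain ⟨φ⟩ := exists_equiv_canon c e he
    rw [canonF, ← Set.ncard_eq_toFinset_card _ (canon_finite c e), ← Nat.card_coe_set_eq]
    exact Nat.card_congr φ

/-! ### Renaming colors -/

lemma image_mem_canonF {k : ℕ} (σ : Equiv.Perm (Fin k)) {c : Fin k} {e : Fin k →₀ ℕ}
    {S : Finset (List (Fin k))} (h : S ∈ canonF c e) :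
    S.image (List.map σ) ∈ canonF (σ c) (e.mapDomain σ) := by
  obtain ⟨hG, hw⟩ := mem_canonF.1 h
  have hinj : Function.Injective (List.map σ) := List.map_injective_iff.2 σ.injective
  refine mem_canonF.2 ⟨⟨?_, ?_⟩, ?_⟩
  · intro l hl
    obtain ⟨m, hm, rfl⟩ := Finset.mem_image.1 hl
    rw [← List.map_cons, List.isChain_map]
    exact (hG.1 m hm).imp fun a b hab => σ.injective.ne hab
  · intro l a hl
    obtain ⟨m, hm, hml⟩ := Finset.mem_image.1 hl
    obtain ⟨m₁, m₂, rfl, rfl, h2⟩ := List.map_eq_append_iff.1 hml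
    obtain ⟨b, rfl, -⟩ := List.map_eq_singleton_iff.1 h2
    exact Finset.mem_image_of_mem _ (hG.2 _ _ hm)
  · rw [← hw, weight, weight, Finset.sum_image (fun a _ b _ h => hinj h),
      Finsupp.mapDomain_finsetSum]
    simp only [endOf_map, Finsupp.mapDomain_single]

lemma card_canonF_perm {k : ℕ} (σ : Equiv.Perm (Fin k)) (c : Fin k) (e : Fin k →₀ ℕ) :
    (canonF (σ c) (e.mapDomain σ)).card = (canonF c e).card := by
  have hinj : ∀ τ : Equiv.Perm (Fin k),
      Function.Injective (Finset.image (List.map τ)) := fun τ =>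
    Finset.image_injective (List.map_injective_iff.2 τ.injective)
  apply le_antisymm
  · refine Finset.card_le_card_of_injOn _ (fun S hS => ?_) (hinj σ.symm).injOn
    have h := image_mem_canonF σ.symm hS
    rw [← Finsupp.mapDomain_comp] at h
    simpa using h
  · exact Finset.card_le_card_of_injOn _ (fun S hS => image_mem_canonF σ hS) (hinj σ).injOn

/-- Exchanging the colors `i` and `c` turns trees with root color `c` into trees with root
color `i`. -/
lemma tHat_swap {k : ℕ} (i c : Fin k) (e : Fin k →₀ ℕ) :
    tHat k (fun j => e (Equiv.swap i c j)) c = (canonF i e).card := by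
  have h : (fun j => e (Equiv.swap i c j)) =
      fun j => (e.mapDomain (Equiv.swap i c)) j := by
    funext j
    rw [Finsupp.mapDomain_equiv_apply, Equiv.symm_swap]
  have hp := card_canonF_perm (Equiv.swap i c) i e
  rw [Equiv.swap_apply_left] at hp
  rw [h, tHat_eq, hp]

/-! ### Splitting at the root -/

/-- The words of the subtree rooted at the child of color `i` of the root. -/
noncomputable def sub {k : ℕ} (S : Finset (List (Fin k))) (i : Fin k) : Finset (List (Fin k)) :=
  S.preimage (List.cons i) List.cons_injective.injOn

/-- The words of the tree whose root has subtrees `f i`. -/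
noncomputable def glue {k : ℕ} (f : Fin k → Finset (List (Fin k))) : Finset (List (Fin k)) :=
  insert [] (Finset.univ.biUnion fun i => (f i).image (List.cons i))

section Splitting

variable {k : ℕ} {c : Fin k} {S : Finset (List (Fin k))} {f : Fin k → Finset (List (Fin k))}

lemma mem_sub {i : Fin k} {l : List (Fin k)} : l ∈ sub S i ↔ i :: l ∈ S := Finset.mem_preimage

lemma nil_mem_glue : [] ∈ glue f := Finset.mem_insert_self _ _

lemma cons_mem_glue {i : Fin k} {l : List (Fin k)} : i :: l ∈ glue f ↔ l ∈ f i := by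
  simp [glue]

lemma sub_glue : sub (glue f) = f := by
  ext i l
  rw [mem_sub, cons_mem_glue]

lemma glue_sub (h : [] ∈ S) : glue (sub S) = S := by
  ext l
  cases l with
  | nil => simp [h, nil_mem_glue]
  | cons i l => rw [cons_mem_glue, mem_sub]

lemma Good.sub (h : Good c S) (i : Fin k) : Good i (sub S i) :=
  ⟨fun l hl => (List.isChain_cons_cons.1 (h.1 _ (mem_sub.1 hl))).2,
    fun l a hl => mem_sub.2 (h.2 (i :: l) a (mem_sub.1 hl))⟩

lemma Good.sub_self (h : Good c S) : _root_.sub S c = ∅ := by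
  ext l
  simp only [Finset.notMem_empty, iff_false]
  exact fun hl => (List.isChain_cons_cons.1 (h.1 _ (mem_sub.1 hl))).1 rfl

lemma good_glue (hc : f c = ∅) (h : ∀ i, i ≠ c → Good i (f i)) : Good c (glue f) := by
  have hne : ∀ {i l}, i :: l ∈ glue f → i ≠ c := by
    rintro i l hl rfl
    rw [cons_mem_glue, hc] at hl
    simp at hl
  constructor
  · rintro (_ | ⟨i, l⟩) hl
    · exact List.isChain_singleton _
    · have hi := hne hl
      exact List.isChain_cons_cons.2 ⟨hi.symm, (h i hi).1 l (cons_mem_glue.1 hl)⟩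
  · rintro (_ | ⟨i, l⟩) a hl
    · exact nil_mem_glue
    · have hi := hne hl
      exact cons_mem_glue.2 ((h i hi).2 l a (cons_mem_glue.1 hl))

lemma weight_glue (hc : f c = ∅) : weight c (glue f) =
    Finsupp.single c 1 + ∑ i ∈ Finset.univ.erase c, weight i (f i) := by
  rw [weight, glue, Finset.sum_insert (by simp), Finset.sum_biUnion, endOf_nil]
  · rw [Finset.sum_erase _ (by simp [hc, weight])]
    congr 1
    refine Finset.sum_congr rfl fun i _ => ?_
    rw [Finset.sum_image (fun a _ b _ h => List.cons_injective h), weight]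
    simp only [endOf_cons]
  · intro i _ j _ hij
    refine Finset.disjoint_left.2 fun _ hl hl' => ?_
    obtain ⟨m, -, rfl⟩ := Finset.mem_image.1 hl
    obtain ⟨m', -, h⟩ := Finset.mem_image.1 hl'
    exact hij (List.cons.inj h).1.symm

lemma weight_eq (h : Good c S) (h0 : [] ∈ S) : weight c S =
    Finsupp.single c 1 + ∑ i ∈ Finset.univ.erase c, weight i (sub S i) := by
  conv_lhs => rw [← glue_sub h0]
  exact weight_glue h.sub_self

end Splitting

/-- A nonempty tree with root color `c` amounts to a possibly empty tree with root color `i` for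
every `i ≠ c`. -/
lemma card_canonF_add {k : ℕ} (c : Fin k) (e : Fin k →₀ ℕ) :
    (canonF c (Finsupp.single c 1 + e)).card =
      ∑ p ∈ Finset.finsuppAntidiag (Finset.univ.erase c) e,
        ∏ i ∈ Finset.univ.erase c, (canonF i (p i)).card := by
  have hprod : ∀ p : Fin k →₀ (Fin k →₀ ℕ), ∏ i ∈ Finset.univ.erase c, (canonF i (p i)).card =
      (Fintype.piFinset fun i => if i = c then {∅} else canonF i (p i)).card := by
    intro p
    rw [Fintype.card_piFinset, ← Finset.prod_erase Finset.univ (a := c)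
      (f := fun i => (if i = c then {∅} else canonF i (p i)).card) (by simp)]
    refine Finset.prod_congr rfl fun i hi => ?_
    rw [if_neg (Finset.ne_of_mem_erase hi)]
  simp only [hprod]
  rw [← Finset.card_sigma]
  have hnil : ∀ {S}, S ∈ canonF c (Finsupp.single c 1 + e) → [] ∈ S := by
    intro S hS
    obtain ⟨hG, hw⟩ := mem_canonF.1 hS
    rcases S.eq_empty_or_nonempty with rfl | ⟨l, hl⟩
    · have := DFunLike.congr_fun hw c
      simp [weight] at this
      omega
    · exact hG.nil_mem hl
  refine Finset.card_nbij'
    (fun S => ⟨Finsupp.equivFunOnFinite.symm fun i => weight i (sub S i), sub S⟩)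
    (fun x => glue x.2) ?_ ?_ ?_ ?_
  · intro S hS
    obtain ⟨hG, hw⟩ := mem_canonF.1 hS
    simp only [Finset.coe_sigma, Set.mem_sigma_iff, Finset.mem_coe, Finset.mem_finsuppAntidiag,
      Fintype.mem_piFinset, Finsupp.equivFunOnFinite_symm_apply_apply]
    refine ⟨⟨?_, ?_⟩, ?_⟩
    · rw [weight_eq hG (hnil hS)] at hw
      exact add_left_cancel hw
    · intro i hi
      refine Finset.mem_erase.2 ⟨?_, Finset.mem_univ _⟩
      rintro rfl
      simp [hG.sub_self, weight] at hi
    · intro i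
      split_ifs with hi
      · subst hi
        simp [hG.sub_self]
      · exact mem_canonF.2 ⟨hG.sub i, rfl⟩
  · rintro ⟨p, f⟩ hpf
    simp only [Finset.coe_sigma, Set.mem_sigma_iff, Finset.mem_coe, Finset.mem_finsuppAntidiag,
      Fintype.mem_piFinset] at hpf
    obtain ⟨⟨hsum, hsupp⟩, hf⟩ := hpf
    have hc : f c = ∅ := by simpa using hf c
    have hi : ∀ i, i ≠ c → Good i (f i) ∧ weight i (f i) = p i := fun i hi =>
      mem_canonF.1 (by simpa [hi] using hf i)
    refine mem_canonF.2 ⟨good_glue hc fun i h => (hi i h).1, ?_⟩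
    rw [weight_glue hc, ← hsum]
    exact congrArg _ (Finset.sum_congr rfl fun i h => (hi i (Finset.ne_of_mem_erase h)).2)
  · intro S hS
    exact glue_sub (hnil hS)
  · rintro ⟨p, f⟩ hpf
    simp only [Finset.coe_sigma, Set.mem_sigma_iff, Finset.mem_coe, Finset.mem_finsuppAntidiag,
      Fintype.mem_piFinset] at hpf
    obtain ⟨⟨hsum, hsupp⟩, hf⟩ := hpf
    simp only [sub_glue]
    congr 1
    ext1 i
    rw [Finsupp.equivFunOnFinite_symm_apply_apply]
    by_cases h : i = c
    · subst h
      have hp : p i = 0 := by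
        by_contra hne
        exact (Finset.mem_erase.1 (hsupp (Finsupp.mem_support_iff.2 hne))).1 rfl
      have hfi : f i = ∅ := by simpa using hf i
      simp [hp, hfi, weight]
    · exact (mem_canonF.1 (by simpa [h] using hf i)).2

/-- A nonempty tree with root color `c` has a vertex of color `c`. -/
lemma canonF_eq_empty {k : ℕ} {c : Fin k} {e : Fin k →₀ ℕ} (he : e ≠ 0)
    (hc : ¬ Finsupp.single c 1 ≤ e) : canonF c e = ∅ := by
  refine Finset.eq_empty_of_forall_notMem fun S hS => ?_
  obtain ⟨hG, rfl⟩ := mem_canonF.1 hS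
  rcases S.eq_empty_or_nonempty with rfl | ⟨l, hl⟩
  · simp [weight] at he
  · rw [weight_eq hG (hG.nil_mem hl)] at hc
    exact hc le_self_add

/-- `τ̂_c = 1 + u_c · Π_{i ≠ c} τ̂_c(u_{(i c)·1},…,u_{(i c)·k})`. -/
theorem statement12 (k : ℕ) (hk : 1 ≤ k) (c : Fin k) :
    tauHat k c =
      1 + (MvPowerSeries.X c) *
        ∏ i ∈ Finset.univ.erase c, tauHatPerm k c (Equiv.swap i c) := by
  have hcoeff : ∀ i e, MvPowerSeries.coeff e (tauHatPerm k c (Equiv.swap i c)) =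
      ((canonF i e).card : ℤ) := fun i e => congrArg Nat.cast (tHat_swap i c e)
  ext e
  have hL : MvPowerSeries.coeff e (tauHat k c) = ((canonF c e).card : ℤ) :=
    congrArg Nat.cast (tHat_eq c e)
  rw [hL, map_add, MvPowerSeries.coeff_one, MvPowerSeries.X_def, MvPowerSeries.coeff_monomial_mul,
    one_mul]
  by_cases he : e = 0
  · subst he
    rw [← tHat_eq]
    simp [tHat]
  · rw [if_neg he, zero_add]
    split_ifs with hc
    · obtain ⟨d, rfl⟩ := exists_add_of_le hc
      rw [add_tsub_cancel_left, MvPowerSeries.coeff_prod, card_canonF_add]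
      simp only [hcoeff, Nat.cast_sum, Nat.cast_prod]
    · rw [canonF_eq_empty he hc]
      simp
end

section
/- For every k ≥ 2 and all 1 ≤ a < b ≤ k, substituting x_i = [i ∈ {a,b}] and replacing y_i by [i ∈ {a,b}]·y_i in P_k yields the identity P_k([1∈{a,b}],…,[k∈{a,b}], [1∈{a,b}]·y_1,…,[k∈{a,b}]·y_k) = 2^{k−2}·(y_a + y_b − y_a·y_b) in ℤ[y_1,…,y_k], where [i∈{a,b}] is 1 if i ∈ {a,b} and 0 otherwise. -/
/-!
Under the substitution every `S` that is not a subset of `{a, b}` contributes zero, because some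
`y_i` with `i ∈ S` becomes zero. For `S ⊆ {a, b}`, `∑ x_i` becomes `2` and the linear factor
becomes `|S| - 2|S| = -|S|`. Hence `∅` contributes `0`, the singletons contribute
`2 ^ (k - 2) * y_a` and `2 ^ (k - 2) * y_b`, and `{a, b}` contributes `-2 ^ (k - 2) * y_a * y_b`.
When `k = 2`, the set `{a, b}` is everything, and the same value comes from the special convention
for the summand of the full set.
-/

open MvPolynomial

/- The key polynomial `P_k ∈ ℤ[x_1,…,x_k,y_1,…,y_k]`; the variables `x_i` are
indexed by `Sum.inl i` and the variables `y_i` by `Sum.inr i`.  The summand for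
`S = {1,…,k}` is interpreted as `(−1)^k (1−k) y_1⋯y_k`. -/
noncomputable def Pk (k : ℕ) : MvPolynomial (Fin k ⊕ Fin k) ℤ :=
  ∑ S : Finset (Fin k),
    if S = Finset.univ then
      C ((-1) ^ k * (1 - (k : ℤ))) * ∏ i : Fin k, X (Sum.inr i)
    else
      C ((-1 : ℤ) ^ S.card) * (∏ i ∈ S, X (Sum.inr i)) *
        (∑ i : Fin k, (C (if i ∈ S then (1 : ℤ) else 0) - C (S.card : ℤ)) * X (Sum.inl i)) *
        (∑ i : Fin k, X (Sum.inl i)) ^ (k - S.card - 1)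

/-- Substituting `x_i = [i ∈ {a,b}]` and `y_i ↦ [i ∈ {a,b}]·y_i` into `P_k`
yields `2^{k−2}·(y_a + y_b − y_a y_b)` in `ℤ[y_1,…,y_k]`. -/
theorem statement14 (k : ℕ) (hk : 2 ≤ k) (a b : Fin k) (hab : a < b) :
    MvPolynomial.aeval
        (Sum.elim
          (fun i : Fin k => if i = a ∨ i = b then (1 : MvPolynomial (Fin k) ℤ) else 0)
          (fun i : Fin k => if i = a ∨ i = b then (MvPolynomial.X i : MvPolynomial (Fin k) ℤ) else 0))
        (Pk k) =
      (2 : MvPolynomial (Fin k) ℤ) ^ (k - 2) *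
        (MvPolynomial.X a + MvPolynomial.X b - MvPolynomial.X a * MvPolynomial.X b) := by
  have hne : a ≠ b := hab.ne
  unfold Pk
  rw [map_sum]
  generalize hφ : MvPolynomial.aeval (R := ℤ)
        (Sum.elim
          (fun i : Fin k => if i = a ∨ i = b then (1 : MvPolynomial (Fin k) ℤ) else 0)
          (fun i : Fin k => if i = a ∨ i = b then (MvPolynomial.X i : MvPolynomial (Fin k) ℤ) else 0))
        = φ
  have hl : ∀ i, φ (X (Sum.inl i)) = if i = a ∨ i = b then 1 else 0 := by
    intro i; rw [← hφ, aeval_X]; rfl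
  have hr : ∀ i, φ (X (Sum.inr i)) = if i = a ∨ i = b then X i else 0 := by
    intro i; rw [← hφ, aeval_X]; rfl
  -- Only subsets of `{a, b}` contribute: any other `S` has some `i ∈ S` with `y_i ↦ 0`.
  rw [← Finset.sum_subset (Finset.subset_univ (({a, b} : Finset (Fin k)).powerset))]
  · have hx : ∀ c : Fin k → MvPolynomial (Fin k) ℤ,
        ∑ i, c i * (if i = a ∨ i = b then (1 : MvPolynomial (Fin k) ℤ) else 0) = c a + c b := by
      intro c
      have : ∀ i, c i * (if i = a ∨ i = b then (1 : MvPolynomial (Fin k) ℤ) else 0)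
          = if i ∈ ({a, b} : Finset (Fin k)) then c i else 0 := by
        intro i; simp
      simp only [this, Finset.sum_ite_mem, Finset.univ_inter, Finset.sum_pair hne]
    have hx1 : ∑ i, (if i = a ∨ i = b then (1 : MvPolynomial (Fin k) ℤ) else 0) = 2 := by
      have := hx (fun _ => 1)
      simp only [one_mul] at this
      rw [this]; norm_num
    -- For `S ⊆ {a, b}` the right-hand side is the constant `-|S|`.
    have hlin : ∀ S : Finset (Fin k),
        φ (∑ i : Fin k, (C (if i ∈ S then (1 : ℤ) else 0) - C (S.card : ℤ)) * X (Sum.inl i)) =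
          C ((if a ∈ S then (1 : ℤ) else 0) + (if b ∈ S then (1 : ℤ) else 0) - 2 * S.card) := by
      intro S
      simp only [map_sum, map_mul, algHom_C, hl, hx, algebraMap_eq, ← map_add, ← map_sub]
      congr 1
      ring
    have hsum : φ (∑ i : Fin k, X (Sum.inl i)) = 2 := by
      simp only [map_sum, hl, hx1]
    have h0 : (∅ : Finset (Fin k)) ≠ Finset.univ := fun h => by
      have := congrArg Finset.card h
      simp at this; omega
    have h1 : ∀ c : Fin k, ({c} : Finset (Fin k)) ≠ Finset.univ := fun c h => by
      have := congrArg Finset.card h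
      simp at this; omega
    have hps : ({a, b} : Finset (Fin k)).powerset = {∅, {a}, {b}, {a, b}} := by
      ext S
      rw [Finset.mem_powerset, ← Finset.coe_subset, Finset.coe_pair, Set.subset_pair_iff_eq]
      simp only [Finset.mem_insert, Finset.mem_singleton, ← Finset.coe_inj, Finset.coe_empty,
        Finset.coe_singleton, Finset.coe_pair]
    have hab0 : (∅ : Finset (Fin k)) ≠ {a, b} := (Finset.insert_ne_empty _ _).symm
    have hab2 : ({a} : Finset (Fin k)) ≠ {a, b} := fun h => by
      have := congrArg Finset.card h
      simp [Finset.card_pair hne] at this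
    have hab3 : ({b} : Finset (Fin k)) ≠ {a, b} := fun h => by
      have := congrArg Finset.card h
      simp [Finset.card_pair hne] at this
    rw [hps, Finset.sum_insert (by simp [hab0]), Finset.sum_insert (by simp [hab2, hne]),
      Finset.sum_insert (by simp [hab3]), Finset.sum_singleton]
    rw [if_neg h0, if_neg (h1 a), if_neg (h1 b)]
    have hk1 : k - 1 - 1 = k - 2 := by omega
    by_cases hu : ({a, b} : Finset (Fin k)) = Finset.univ
    -- Here `k = 2`, so the summand of `{a, b}` is the one fixed by convention.
    · have hk2 : k = 2 := by
        have := congrArg Finset.card hu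
        simpa [Finset.card_pair hne] using this.symm
      have hP : ∏ i : Fin k, (if i = a ∨ i = b then (X i : MvPolynomial (Fin k) ℤ) else 0) =
          X a * X b := by
        rw [← hu, Finset.prod_pair hne]
        simp
      rw [if_pos hu]
      simp only [map_mul, hlin, map_pow, hsum, map_prod, hP, algHom_C, algebraMap_eq, hr]
      simp [hne, hne.symm, hk1]
      subst hk2
      norm_num
      ring
    · have hk3 : 3 ≤ k := by
        rcases hk.lt_or_eq with h | h
        · exact h
        · exact absurd (Finset.eq_univ_of_card _ (by simp [Finset.card_pair hne, ← h])) hu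
      obtain ⟨m, rfl⟩ := Nat.exists_eq_add_of_le' hk3
      rw [if_neg hu]
      simp only [map_mul, hlin, map_pow, hsum, map_prod, algHom_C, algebraMap_eq, hr]
      simp [hne, hne.symm, Finset.prod_pair hne, Finset.card_pair hne]
      ring
  · intro S _ hS
    obtain ⟨i, hi, hin⟩ : ∃ i ∈ S, ¬ (i = a ∨ i = b) := by
      simpa [Finset.subset_iff] using hS
    have hprod : ∀ T : Finset (Fin k), i ∈ T → ∏ j ∈ T,
        (if j = a ∨ j = b then (X j : MvPolynomial (Fin k) ℤ) else 0) = 0 :=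
      fun T hT => Finset.prod_eq_zero hT (if_neg hin)
    split_ifs
    · simp only [map_mul, map_prod, hr, hprod _ (Finset.mem_univ i), mul_zero]
    · simp only [map_mul, map_prod, hr, hprod _ hi, mul_zero, zero_mul]
end

section
/- For every k ∈ ℕ, the following identity holds in the polynomial ring ℤ[x_1,…,x_k,y_1,…,y_k]: P_k · Π_{i=1}^{k−1} (x_1+⋯+x_k − x_i − 1) = Σ_{I ⊆ {1,…,k−1}} P_k^{(I)} · Π_{i ∈ I} (x_i − y_i) · Π_{j ∈ {1,…,k−1}∖I} (x_1+⋯+x_k − 2x_j + y_j), where P_k^{(I)} := P_k(x_1,…,x_{k−1}, x_k − 1, y_1 + [1∈I], …, y_{k−1} + [k−1∈I], y_k − 1) and [i∈I] is 1 if i ∈ I and 0 otherwise. -/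
/-!
Write `T = x_1 + ⋯ + x_k`.  Expanding products over subsets gives the closed form
`P_k = (1 - k) ∏_j (T - y_j) + ∑_i (T - x_i) ∏_{j ≠ i} (T - y_j)` (`Pk_eq`), in which every
summand is, up to a constant, a product `∏_j (T - z_j)` with each `z_j ∈ {x_j, y_j}`.

For each such product the identity holds separately (`sum_weighted_prod`).  The substitution
replaces `T` by `T - 1` and leaves the factor at the last index unchanged, while at another index `j`
the sum over `I` factors, contributing the weighted sum of the two choices `j ∈ I`, `j ∉ I`, with
weights `x_j - y_j` and `T - 2 x_j + y_j`.  That weighted sum is `(T - 1 - x_j) (T - z_j)`: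
* if `z_j = x_j`, the weights add up to `T - x_j` and multiply `T - 1 - x_j`;
* if `z_j = y_j`, then
  `(x_j - y_j) (T - 2 - y_j) + (T - 2 x_j + y_j) (T - 1 - y_j) = (T - 1 - x_j) (T - y_j)`.
-/

open MvPolynomial

/-- The identity for a single product `∏_j (T - z_j)`, where `z_j = x_j` if `p j` holds and
`z_j = y_j` otherwise. -/
lemma sum_weighted_prod {R ι : Type*} [CommRing R] [Fintype ι] [DecidableEq ι]
    (l : ι) (x y : ι → R) (T : R) (p : ι → Prop) [DecidablePred p] :
    ∑ I ∈ (Finset.univ.erase l).powerset,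
      (∏ j, (T - 1 - if p j then (if j = l then x j - 1 else x j)
        else (if j = l then y j - 1 else y j + if j ∈ I then 1 else 0))) *
        (∏ i ∈ I, (x i - y i)) *
        (∏ j ∈ Finset.univ.erase l \ I, (T - 2 * x j + y j)) =
      (∏ j, (T - if p j then x j else y j)) * ∏ i ∈ Finset.univ.erase l, (T - x i - 1) := by
  have key : ∀ j, (T - (if p j then x j else y j)) * (T - x j - 1) =
      (T - 1 - if p j then x j else y j + 1) * (x j - y j) +
      (T - 1 - if p j then x j else y j) * (T - 2 * x j + y j) := by
    intro j
    split_ifs <;> ring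
  rw [← Finset.mul_prod_erase Finset.univ _ (Finset.mem_univ l), mul_assoc,
    ← Finset.prod_mul_distrib, Finset.prod_congr rfl (fun j _ => key j), Finset.prod_add,
    Finset.mul_sum]
  refine Finset.sum_congr rfl fun I hI => ?_
  have hI' := Finset.mem_powerset.1 hI
  rw [← Finset.mul_prod_erase Finset.univ _ (Finset.mem_univ l),
    ← Finset.prod_sdiff hI', Finset.prod_mul_distrib, Finset.prod_mul_distrib]
  have e0 : (T - 1 - if p l then (if l = l then x l - 1 else x l)
      else (if l = l then y l - 1 else y l + if l ∈ I then 1 else 0)) =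
      T - if p l then x l else y l := by
    simp only [if_true]; split_ifs <;> ring
  have e1 : ∏ j ∈ I, (T - 1 - if p j then (if j = l then x j - 1 else x j)
      else (if j = l then y j - 1 else y j + if j ∈ I then 1 else 0)) =
      ∏ j ∈ I, (T - 1 - if p j then x j else y j + 1) := by
    refine Finset.prod_congr rfl fun j hj => ?_
    have := Finset.ne_of_mem_erase (hI' hj)
    simp [this, hj]
  have e2 : ∏ j ∈ Finset.univ.erase l \ I, (T - 1 - if p j then (if j = l then x j - 1 else x j)
      else (if j = l then y j - 1 else y j + if j ∈ I then 1 else 0)) =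
      ∏ j ∈ Finset.univ.erase l \ I, (T - 1 - if p j then x j else y j) := by
    refine Finset.prod_congr rfl fun j hj => ?_
    obtain ⟨h1, h2⟩ := Finset.mem_sdiff.1 hj
    simp [Finset.ne_of_mem_erase h1, h2]
  rw [e0, e1, e2]
  ring

/-- Expansion of `(T - x_i) ∏_{j ≠ i} (T - y_j)` over the set `S` of indices at which `-y_j` is
chosen; only sets `S` avoiding `i` contribute. -/
lemma prod_choice_expand {R ι : Type*} [CommRing R] [Fintype ι] [DecidableEq ι]
    (x y : ι → R) (T : R) (i : ι) :
    ∏ j, (T - if j = i then x j else y j) =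
      ∑ S : Finset ι, if i ∈ S then 0 else
        (-1) ^ S.card * (∏ j ∈ S, y j) * ((T - x i) * T ^ (Fintype.card ι - S.card - 1)) := by
  have h : ∀ j, (T - if j = i then x j else y j) =
      (if j = i then 0 else -y j) + (if j = i then T - x i else T) := by
    intro j
    split_ifs with h
    · rw [h]; ring
    · ring
  rw [Finset.prod_congr rfl (fun j _ => h j), Finset.prod_add, Finset.powerset_univ]
  refine Finset.sum_congr rfl fun S _ => ?_
  split_ifs with hi
  · rw [Finset.prod_eq_zero hi (by simp), zero_mul]
  · have hi' : i ∈ Finset.univ \ S := by simp [hi]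
    have e1 : ∏ j ∈ S, (if j = i then 0 else -y j) = ∏ j ∈ S, -y j :=
      Finset.prod_congr rfl fun j hj => if_neg (by rintro rfl; exact hi hj)
    have e2 : ∏ j ∈ (Finset.univ \ S).erase i, (if j = i then T - x i else T) =
        T ^ (Fintype.card ι - S.card - 1) := by
      rw [Finset.prod_congr rfl (fun j hj => if_neg (Finset.ne_of_mem_erase hj)),
        Finset.prod_const, Finset.card_erase_of_mem hi',
        Finset.card_sdiff_of_subset (Finset.subset_univ S), Finset.card_univ]
    rw [e1, Finset.prod_neg, ← Finset.mul_prod_erase _ _ hi', e2, if_pos rfl]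

/-- The closed form `(1 - k) ∏_j (T - y_j) + ∑_i (T - x_i) ∏_{j ≠ i} (T - y_j)` of `P_k`, with
`T = ∑_i x_i`. -/
lemma Pk_eq (k : ℕ) :
    Pk k = (1 - (k : MvPolynomial (Fin k ⊕ Fin k) ℤ)) *
        ∏ j : Fin k, ((∑ i : Fin k, X (Sum.inl i)) - X (Sum.inr j)) +
      ∑ i : Fin k, ∏ j : Fin k, ((∑ i : Fin k, X (Sum.inl i)) -
        if j = i then X (Sum.inl j) else X (Sum.inr j)) := by
  set T : MvPolynomial (Fin k ⊕ Fin k) ℤ := ∑ i : Fin k, X (Sum.inl i) with hT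
  have hprod : ∏ j : Fin k, (T - X (Sum.inr j)) =
      ∑ S : Finset (Fin k), (-1) ^ S.card * (∏ j ∈ S, X (Sum.inr j)) * T ^ (k - S.card) := by
    simp only [sub_eq_neg_add]
    rw [Finset.prod_add, Finset.powerset_univ]
    refine Finset.sum_congr rfl fun S _ => ?_
    rw [Finset.prod_neg, Finset.prod_const,
      Finset.card_sdiff_of_subset (Finset.subset_univ S), Finset.card_univ, Fintype.card_fin]
  simp only [prod_choice_expand (fun j : Fin k => X (Sum.inl j)) (fun j => X (Sum.inr j)) T,
    Fintype.card_fin]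
  rw [Finset.sum_comm, hprod, Finset.mul_sum, ← Finset.sum_add_distrib, Pk]
  refine Finset.sum_congr rfl fun S _ => ?_
  split_ifs with hS
  · subst hS
    simp
    ring
  · have hlt : S.card < k := by
      simpa using Finset.card_lt_univ_of_notMem (by simpa [Finset.eq_univ_iff_forall] using hS :
        ∃ i, i ∉ S).choose_spec
    obtain ⟨m, hm⟩ : ∃ m, k - S.card = m + 1 := ⟨k - S.card - 1, by omega⟩
    have hk : (k : MvPolynomial (Fin k ⊕ Fin k) ℤ) = S.card + (m + 1) := by
      have : k = S.card + (m + 1) := by omega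
      exact_mod_cast this
    -- both sides are expressed through `∑_{i ∈ S} x_i`
    have hL : ∑ i : Fin k, (C (if i ∈ S then (1 : ℤ) else 0) - C (S.card : ℤ)) *
        (X (Sum.inl i) : MvPolynomial (Fin k ⊕ Fin k) ℤ) =
        ∑ i ∈ S, X (Sum.inl i) - (S.card : MvPolynomial (Fin k ⊕ Fin k) ℤ) * T := by
      simp [sub_mul, Finset.sum_sub_distrib, ← Finset.mul_sum, apply_ite C, ite_mul, hT]
    have hR : ∑ i : Fin k, (if i ∈ S then 0 else
        (-1) ^ S.card * (∏ j ∈ S, X (Sum.inr j)) * ((T - X (Sum.inl i)) * T ^ m)) =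
        (-1) ^ S.card * (∏ j ∈ S, (X (Sum.inr j) : MvPolynomial (Fin k ⊕ Fin k) ℤ)) *
          ((((m : MvPolynomial (Fin k ⊕ Fin k) ℤ) + 1) * T -
            (T - ∑ i ∈ S, X (Sum.inl i))) * T ^ m) := by
      have hc : ∑ i ∈ Sᶜ, (T - X (Sum.inl i)) =
          ((m : MvPolynomial (Fin k ⊕ Fin k) ℤ) + 1) * T - (T - ∑ i ∈ S, X (Sum.inl i)) := by
        rw [Finset.sum_sub_distrib, Finset.sum_const, Finset.card_compl, Fintype.card_fin, hm,
          hT, ← Finset.sum_add_sum_compl S]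
        simp
        ring
      rw [← hc, Finset.sum_mul, Finset.mul_sum,
        ← Finset.sum_subset (Finset.subset_univ Sᶜ) fun i _ hi => if_pos (by simpa using hi)]
      exact Finset.sum_congr rfl fun i hi => if_neg (by simpa using hi)
    simp only [hm, Nat.add_sub_cancel]
    rw [hL, hR, hk]
    simp only [map_pow, map_neg, map_one]
    ring

/-- The key identity (Lemma "ThePolyLem"(iv)):
`P_k · Π_{i=1}^{k−1} (x_1+⋯+x_k − x_i − 1)
  = Σ_{I ⊆ {1,…,k−1}} P_k^{(I)} · Π_{i∈I} (x_i − y_i) · Π_{j∉I} (x_1+⋯+x_k − 2x_j + y_j)`,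
where `P_k^{(I)} = P_k(x_1,…,x_{k−1}, x_k − 1, y_1 + [1∈I],…,y_{k−1} + [k−1∈I], y_k − 1)`.
The index `k` is the last element `⟨k−1,_⟩` of `Fin k`, and `{1,…,k−1}` is
`Finset.univ.erase ⟨k−1,_⟩`. -/
theorem statement16 (k : ℕ) (hk : 1 ≤ k) :
    Pk k *
        ∏ i ∈ Finset.univ.erase (⟨k - 1, by omega⟩ : Fin k),
          ((∑ j : Fin k, X (Sum.inl j)) - X (Sum.inl i) - 1) =
      ∑ I ∈ (Finset.univ.erase (⟨k - 1, by omega⟩ : Fin k)).powerset,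
        (MvPolynomial.aeval
            (Sum.elim
              (fun i : Fin k =>
                if i = (⟨k - 1, by omega⟩ : Fin k) then X (Sum.inl i) - 1 else X (Sum.inl i))
              (fun i : Fin k =>
                if i = (⟨k - 1, by omega⟩ : Fin k) then X (Sum.inr i) - 1
                else X (Sum.inr i) + (if i ∈ I then 1 else 0)))
            (Pk k)) *
          (∏ i ∈ I, (X (Sum.inl i) - X (Sum.inr i))) *
          (∏ j ∈ (Finset.univ.erase (⟨k - 1, by omega⟩ : Fin k)) \ I,
            ((∑ jj : Fin k, X (Sum.inl jj)) - 2 * X (Sum.inl j) + X (Sum.inr j))) := by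
  set l : Fin k := ⟨k - 1, by omega⟩
  have hsum : ∑ i : Fin k, (if i = l then X (Sum.inl i) - 1 else X (Sum.inl i)) =
      (∑ i : Fin k, X (Sum.inl i) : MvPolynomial (Fin k ⊕ Fin k) ℤ) - 1 := by
    have h : ∀ i : Fin k, (if i = l then X (Sum.inl i) - 1 else X (Sum.inl i)) =
        (X (Sum.inl i) : MvPolynomial (Fin k ⊕ Fin k) ℤ) - if i = l then 1 else 0 := by
      intro i; split_ifs <;> ring
    simp only [h, Finset.sum_sub_distrib, Finset.sum_ite_eq', Finset.mem_univ, if_true]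
  have key := fun (p : Fin k → Prop) [DecidablePred p] => sum_weighted_prod l
    (fun i => (X (Sum.inl i) : MvPolynomial (Fin k ⊕ Fin k) ℤ)) (fun i => X (Sum.inr i))
    (∑ i, X (Sum.inl i)) p
  have key0 := key (fun _ => False)
  simp only [if_false] at key0
  rw [Pk_eq, add_mul, mul_assoc, ← key0, Finset.sum_mul,
    Finset.sum_congr rfl (fun i _ => (key (fun j => j = i)).symm), Finset.sum_comm,
    Finset.mul_sum, ← Finset.sum_add_distrib]
  refine Finset.sum_congr rfl fun I _ => ?_
  simp only [map_add, map_mul, map_sub, map_one, map_natCast, map_prod, map_sum, aeval_X,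
    apply_ite (aeval _), Sum.elim_inl, Sum.elim_inr, hsum, add_mul, Finset.sum_mul, mul_assoc]
end

section
/- For all u, m ∈ ℤ≥0 and all s ∈ ℤ: Σ_{r=0}^{u} (−1)^r · r · C(s−r, m) · C(u, r) = −u · C(s−u, m−u+1), as an identity of integers. -/
/-!
Since `r * C(u, r) = u * C(u - 1, r - 1)`, the sum equals `-u` times
`∑ j ≤ u - 1, (-1)^j C(u - 1, j) C((s - 1) - j, m)`, which is the `(u - 1)`-st iterated backward
difference of `a ↦ C(a, m)` at `a = s - 1`. By Pascal's rule (`gchoose_pascal`), valid for all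
integer arguments, each backward difference lowers both arguments by one, so the iterated
difference is `C(s - 1 - (u - 1), m - (u - 1))` (`sum_alternating_gchoose`).
-/

/- The generalized binomial coefficient `C(a,b)` for `a, b ∈ ℤ`:
`C(a,b) = a(a−1)⋯(a−b+1)/b!` when `b ≥ 0`, and `0` when `b < 0`. -/
def gchoose (a b : ℤ) : ℚ :=
  if 0 ≤ b then (∏ i ∈ Finset.range b.toNat, ((a : ℚ) - (i : ℚ))) / (Nat.factorial b.toNat : ℚ)
  else 0

/-- Pascal's rule; the convention `C(a, b) = 0` for `b < 0` makes it hold for every integer `b`. -/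
theorem gchoose_pascal (a b : ℤ) :
    gchoose a b - gchoose (a - 1) b = gchoose (a - 1) (b - 1) := by
  rcases lt_trichotomy b 0 with hb | rfl | hb
  · simp [gchoose, not_le.mpr hb, show ¬ (1 ≤ b) by lia]
  · simp [gchoose]
  · obtain ⟨k, rfl⟩ : ∃ k : ℕ, b = k + 1 := ⟨(b - 1).toNat, by lia⟩
    have h1 : ((k : ℤ) + 1).toNat = k + 1 := by lia
    have h2 : ((k : ℤ) + 1 - 1).toNat = k := by lia
    have h3 : (0 : ℤ) ≤ (k : ℤ) + 1 := by lia
    have h4 : (0 : ℤ) ≤ (k : ℤ) + 1 - 1 := by lia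
    simp only [gchoose, h1, h2, if_pos h3, if_pos h4]
    -- `a(a-1)⋯(a-k)` and `(a-1)⋯(a-1-k)` share the factor `(a-1)⋯(a-k)`.
    rw [Finset.prod_range_succ', Finset.prod_range_succ, Nat.factorial_succ]
    have h5 : ∏ i ∈ Finset.range k, ((a : ℚ) - ((i + 1 : ℕ) : ℚ)) =
        ∏ i ∈ Finset.range k, (((a - 1 : ℤ) : ℚ) - (i : ℚ)) :=
      Finset.prod_congr rfl fun i _ => by push_cast; ring
    rw [h5]
    have hk : (k.factorial : ℚ) ≠ 0 := by positivity
    have hk' : (k : ℚ) + 1 ≠ 0 := by positivity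
    generalize ∏ i ∈ Finset.range k, (((a - 1 : ℤ) : ℚ) - (i : ℚ)) = P
    push_cast
    field_simp
    ring

/-- Pascal's rule for the weights `(-1)^j C(n + 1, j)`: an `(n + 1)`-st difference is the `n`-th
difference of a first difference. -/
theorem sum_alternating_choose_succ (n : ℕ) (f : ℕ → ℚ) :
    ∑ j ∈ Finset.range (n + 2), (-1 : ℚ) ^ j * ((n + 1).choose j : ℚ) * f j =
      ∑ j ∈ Finset.range (n + 1), (-1 : ℚ) ^ j * (n.choose j : ℚ) * (f j - f (j + 1)) := by
  have h : ∑ j ∈ Finset.range (n + 1), (-1 : ℚ) ^ j * (n.choose j : ℚ) * f j =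
      ∑ j ∈ Finset.range (n + 1), (-1 : ℚ) ^ (j + 1) * (n.choose (j + 1) : ℚ) * f (j + 1) + f 0 := by
    have h0 := Finset.sum_range_succ (fun j => (-1 : ℚ) ^ j * (n.choose j : ℚ) * f j) (n + 1)
    rw [Finset.sum_range_succ'] at h0
    simpa using h0.symm
  rw [Finset.sum_range_succ']
  simp only [mul_sub, Finset.sum_sub_distrib]
  rw [h, add_sub_right_comm, ← Finset.sum_sub_distrib]
  congr 1
  · refine Finset.sum_congr rfl fun j _ => ?_
    rw [Nat.choose_succ_succ]
    push_cast
    ring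
  · simp

theorem sum_alternating_gchoose (n : ℕ) (a b : ℤ) :
    ∑ j ∈ Finset.range (n + 1), (-1 : ℚ) ^ j * (n.choose j : ℚ) * gchoose (a - j) b =
      gchoose (a - n) (b - n) := by
  induction n generalizing a b with
  | zero => simp
  | succ n ih =>
    rw [sum_alternating_choose_succ n fun j => gchoose (a - j) b]
    have h : ∀ j : ℕ, gchoose (a - j) b - gchoose (a - (j + 1 : ℕ)) b =
        gchoose (a - 1 - j) (b - 1) := fun j => by
      rw [show a - ((j + 1 : ℕ) : ℤ) = a - j - 1 by push_cast; ring, gchoose_pascal,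
        sub_right_comm]
    simp only [h]
    rw [ih]
    congr 1 <;> push_cast <;> ring

/-- `Σ_{r=0}^{u} (−1)^r r C(s−r, m) C(u, r) = −u C(s−u, m−u+1)`. -/
theorem statement17 (u m : ℕ) (s : ℤ) :
    (∑ r ∈ Finset.range (u + 1),
        (-1 : ℚ) ^ r * (r : ℚ) * gchoose (s - r) (m : ℤ) * (u.choose r : ℚ)) =
      -(u : ℚ) * gchoose (s - u) ((m : ℤ) - u + 1) := by
  rcases u with _ | n
  · simp
  · rw [Finset.sum_range_succ']
    have h : ∀ j : ℕ, (-1 : ℚ) ^ (j + 1) * ((j + 1 : ℕ) : ℚ) *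
        gchoose (s - ((j + 1 : ℕ) : ℤ)) (m : ℤ) * ((n + 1).choose (j + 1) : ℚ) =
        -((n + 1 : ℕ) : ℚ) * ((-1 : ℚ) ^ j * (n.choose j : ℚ) * gchoose (s - 1 - j) m) := fun j => by
      have hc : ((n + 1 : ℕ) : ℚ) * (n.choose j : ℚ) =
          ((n + 1).choose (j + 1) : ℚ) * ((j + 1 : ℕ) : ℚ) := by
        exact_mod_cast Nat.add_one_mul_choose_eq n j
      rw [show s - ((j + 1 : ℕ) : ℤ) = s - 1 - j by push_cast; ring, pow_succ]
      linear_combination (-1 : ℚ) ^ j * gchoose (s - 1 - j) m * hc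
    simp only [h]
    rw [← Finset.mul_sum, sum_alternating_gchoose,
      show s - 1 - (n : ℤ) = s - ((n + 1 : ℕ) : ℤ) by push_cast; ring,
      show (m : ℤ) - n = (m : ℤ) - ((n + 1 : ℕ) : ℤ) + 1 by push_cast; ring]
    simp
end

section
/- For all k ≥ 2, m ≥ 1, and n ≥ 1: Σ_{w=0}^{m} (−1)^{m−w} · C(m, w) · A_n(k−1, w) = (m/n) · C(kn−n, n−m), as an identity of rational numbers. -/
/-!
With `N = n (k - 1)`, the absorption identity gives `A_n(k-1, w) = (w / n) C(N + w - 1, n - 1)`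
(`fussCat_succ`), and `w C(m, w) = m C(m - 1, w - 1)`. Substituting `w = v + 1`, the sum becomes
`(m / n) ∑ v, (-1) ^ (m - 1 - v) C(m - 1, v) C(N + v, n - 1)`, which is `m / n` times the
`(m - 1)`-st forward difference at `N` of `x ↦ C(x, n - 1)`. By Pascal's rule each difference
lowers the bottom index by one (`fwdDiff_iter_chooseZ`), so the result is `(m / n) C(N, n - m)`.
-/

/- Fuss–Catalan number `A_n(p,r) = (r/(np+r))·C(np+r,n)`; for `r = 0` and
`n ≥ 1`, `p ≥ 1` this formula gives `0 = A_n(p,0)` as required. -/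
def fussCat (n p r : ℕ) : ℚ := ((r : ℚ) / ((n * p + r : ℕ) : ℚ)) * ((n * p + r).choose n : ℚ)

/- Binomial coefficient `C(a,b)` with integer bottom, `0` when `b < 0`. -/
def chooseZ (a : ℕ) (b : ℤ) : ℚ := if 0 ≤ b then (a.choose b.toNat : ℚ) else 0

/-- Pascal's rule for integer bottom index, in difference form. -/
lemma chooseZ_succ_sub (a : ℕ) (b : ℤ) :
    chooseZ (a + 1) b - chooseZ a b = chooseZ a (b - 1) := by
  rcases lt_trichotomy b 0 with hb | rfl | hb
  · simp [chooseZ, not_le.2 hb, show ¬ (1 : ℤ) ≤ b by omega]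
  · simp [chooseZ]
  · obtain ⟨c, rfl⟩ : ∃ c : ℕ, b = c + 1 := ⟨(b - 1).toNat, by omega⟩
    have h : ((c : ℤ) + 1).toNat = c + 1 := by omega
    have h0 : (0 : ℤ) ≤ c + 1 := by omega
    simp [chooseZ, h, h0, Nat.choose_succ_succ]

lemma fwdDiff_iter_chooseZ (b : ℤ) (M : ℕ) :
    (fwdDiff 1)^[M] (fun x : ℕ => chooseZ x b) = fun x => chooseZ x (b - M) := by
  induction M with
  | zero => simp
  | succ M ih =>
    funext x
    rw [Function.iterate_succ_apply', ih]
    simp only [fwdDiff, chooseZ_succ_sub]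
    congr 1
    push_cast
    ring

lemma fussCat_succ (n p v : ℕ) :
    fussCat (n + 1) p (v + 1) =
      ((v + 1 : ℕ) : ℚ) / ((n + 1 : ℕ) : ℚ) * (((n + 1) * p + v).choose n : ℚ) := by
  have h := Nat.add_one_mul_choose_eq ((n + 1) * p + v) n
  have h' : (((n + 1) * p + v + 1 : ℕ) : ℚ) * (((n + 1) * p + v).choose n : ℚ) =
      (((n + 1) * p + v + 1).choose (n + 1) : ℚ) * ((n + 1 : ℕ) : ℚ) := by exact_mod_cast h
  have h1 : (((n + 1) * p + v + 1 : ℕ) : ℚ) ≠ 0 := Nat.cast_ne_zero.2 (Nat.succ_ne_zero _)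
  have h2 : ((n + 1 : ℕ) : ℚ) ≠ 0 := Nat.cast_ne_zero.2 (Nat.succ_ne_zero _)
  rw [fussCat, ← add_assoc, div_mul_eq_mul_div, div_mul_eq_mul_div, div_eq_div_iff h1 h2,
    mul_assoc, ← h']
  ring

/-- `Σ_{w=0}^{m} (−1)^{m−w} C(m,w) A_n(k−1,w) = (m/n)·C(kn−n, n−m)`. -/
theorem statement19 (k m n : ℕ) (hk : 2 ≤ k) (hm : 1 ≤ m) (hn : 1 ≤ n) :
    (∑ w ∈ Finset.range (m + 1),
        (-1 : ℚ) ^ (m - w) * (m.choose w : ℚ) * fussCat n (k - 1) w) =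
      ((m : ℚ) / (n : ℚ)) * chooseZ (k * n - n) ((n : ℤ) - (m : ℤ)) := by
  obtain ⟨p, rfl⟩ : ∃ p, k = p + 1 := ⟨k - 1, by omega⟩
  obtain ⟨M, rfl⟩ : ∃ M, m = M + 1 := ⟨m - 1, by omega⟩
  obtain ⟨j, rfl⟩ : ∃ j, n = j + 1 := ⟨n - 1, by omega⟩
  have hN : (p + 1) * (j + 1) - (j + 1) = (j + 1) * p := by
    rw [add_one_mul, Nat.add_sub_cancel, mul_comm]
  have hb : ((j + 1 : ℕ) : ℤ) - ((M + 1 : ℕ) : ℤ) = (j : ℤ) - M := by push_cast; ring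
  have hdiff := congrFun (fwdDiff_iter_chooseZ (j : ℤ) M) ((j + 1) * p)
  rw [fwdDiff_iter_eq_sum_shift] at hdiff
  rw [Finset.sum_range_succ', hN, hb, ← hdiff, Finset.mul_sum]
  have h0 : fussCat (j + 1) (p + 1 - 1) 0 = 0 := by simp [fussCat]
  rw [h0, mul_zero, add_zero]
  refine Finset.sum_congr rfl fun v _ => ?_
  have hc : ((M + 1 : ℕ) : ℚ) * (M.choose v : ℚ) =
      ((M + 1).choose (v + 1) : ℚ) * ((v + 1 : ℕ) : ℚ) := by
    exact_mod_cast Nat.add_one_mul_choose_eq M v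
  rw [Nat.add_sub_cancel, fussCat_succ, Nat.add_sub_add_right]
  have hz : chooseZ ((j + 1) * p + v • 1) (j : ℤ) = (((j + 1) * p + v).choose j : ℚ) := by
    simp [chooseZ]
  rw [hz, zsmul_eq_mul]
  push_cast at hc ⊢
  linear_combination (-(-1 : ℚ) ^ (M - v) * (((j + 1) * p + v).choose j : ℚ) / ((j : ℚ) + 1)) * hc
end
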